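/- Let j be a positive integer and set k := ⌈log₂(j(j+1))⌉ + 7. Let M^{(1)}, …, M^{(k)} be weight sequences satisfying (m^{(i)}_ℓ)^{1/ℓ} → ∞ for all 1 ≤ i ≤ k, such that there exists B ≥ 1 with Γ̄_{m^{(2)}}(B·t) ≤ Γ̲_{m^{(1)}}(t) for all t > 0, and mg(M^{(i)}, M^{(i+1)}) < ∞ for all 2 ≤ i ≤ k−1. Let f : [-1,1] → ℂ. (Roumieu case) If f^j and f^{j+1} are restrictions to [-1,1] of C^∞ functions g, h on (-1,1) with sup_{x,ℓ} |g^{(ℓ)}(x)|/(σ^ℓ·M^{(1)}_ℓ) < ∞ and sup_{x,ℓ} |h^{(ℓ)}(x)|/(σ^ℓ·M^{(1)}_ℓ) < ∞ for some σ > 0, then f is of class E^{M^{(k)}} (Roumieu) on (-1,1). (Beurling case) If the above bounds on g and h hold for every σ > 0 (with constants allowed to depend on σ), then f is of class E^{(M^{(k)})} (Beurling) on (-1,1). -/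

import Mathlib

open Filter Set Asymptotics MeasureTheory

noncomputable section

/-- `M` is a weight sequence: `M 0 = 1`, positive, `M 1 ≥ 1`, log-convex and
`M k ^ (1/k) → ∞`. -/
def IsWeightSeq (M : ℕ → ℝ) : Prop :=
  M 0 = 1 ∧ (∀ k, 0 < M k) ∧ 1 ≤ M 1 ∧
    (∀ k : ℕ, 1 ≤ k → M k ^ 2 ≤ M (k - 1) * M (k + 1)) ∧
    Tendsto (fun k : ℕ => M k ^ (1 / (k : ℝ))) atTop atTop

/-- The sequence `m k = M k / k!`. -/
def mseq (M : ℕ → ℝ) : ℕ → ℝ := fun k => M k / (Nat.factorial k : ℝ)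

/-- Log-convexity of a sequence. -/
def LogConvexSeq (m : ℕ → ℝ) : Prop := ∀ k : ℕ, 1 ≤ k → m k ^ 2 ≤ m (k - 1) * m (k + 1)

/-- `m k ^ (1/k) → ∞`. -/
def RootTendsToInfty (m : ℕ → ℝ) : Prop :=
  Tendsto (fun k : ℕ => m k ^ (1 / (k : ℝ))) atTop atTop

/-- Moderate growth of a sequence. -/
def ModerateGrowth (M : ℕ → ℝ) : Prop :=
  ∃ C : ℝ, 0 < C ∧ ∀ j k : ℕ, M (j + k) ≤ C ^ (j + k) * M j * M k

/-- Derivation closedness of a sequence. -/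
def DerivClosed (M : ℕ → ℝ) : Prop :=
  ∃ C : ℝ, 0 < C ∧ ∀ k : ℕ, M (k + 1) ≤ C ^ (k + 1) * M k

/-- Non-quasianalyticity: `∑_{k≥1} M (k-1) / M k = ∑_{k≥1} 1/μ_k < ∞`. -/
def NonQuasianalytic (M : ℕ → ℝ) : Prop := Summable fun k : ℕ => M k / M (k + 1)

/-- Quasianalyticity: `∑_{k≥1} 1/μ_k = ∞`. -/
def Quasianalytic (M : ℕ → ℝ) : Prop := ¬ NonQuasianalytic M

/-- The associated function `h_m (t) = inf_k m k * t ^ k`. -/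
def hFun (m : ℕ → ℝ) (t : ℝ) : ℝ := ⨅ k : ℕ, m k * t ^ k

/-- `Γ̄_m (t) = min {k | h_m t = m k * t ^ k}`. -/
def GammaBar (m : ℕ → ℝ) (t : ℝ) : ℕ := sInf {k : ℕ | hFun m t = m k * t ^ k}

/-- `Γ̲_m (t) = min {k | m (k+1) / m k ≥ 1 / t}`. -/
def GammaLow (m : ℕ → ℝ) (t : ℝ) : ℕ := sInf {k : ℕ | 1 / t ≤ m (k + 1) / m k}

/-- The set whose supremum is `mg (M, N)`. -/
def mgSet (M N : ℕ → ℝ) : Set ℝ :=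
  {x | ∃ j k : ℕ, 1 ≤ j + k ∧ x = (M (j + k) / (N j * N k)) ^ (1 / (j + k : ℝ))}

/-- `mg (M, N) = sup_{j+k ≥ 1} (M (j+k) / (N j * N k)) ^ (1/(j+k))`. -/
def mg (M N : ℕ → ℝ) : ℝ := sSup (mgSet M N)

/-- `mg (M, N) < ∞`. -/
def MgFinite (M N : ℕ → ℝ) : Prop := BddAbove (mgSet M N)

/-- A weight sequence is regular: `m k ^ (1/k) → ∞`, derivation closed, and
`Γ̄_m (C t) ≤ Γ̲_m t` for some `C ≥ 1`. -/
def RegularWS (M : ℕ → ℝ) : Prop :=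
  RootTendsToInfty (mseq M) ∧ DerivClosed M ∧
    ∃ C : ℝ, 1 ≤ C ∧ ∀ t : ℝ, 0 < t → GammaBar (mseq M) (C * t) ≤ GammaLow (mseq M) t

/-- `f` is of class `E^{M}` (Roumieu) on the open set `U`. -/
def RoumieuOn {E : Type*} [NormedAddCommGroup E] [NormedSpace ℝ E]
    (M : ℕ → ℝ) (f : E → ℂ) (U : Set E) : Prop :=
  ContDiffOn ℝ (⊤ : ℕ∞) f U ∧
    ∀ V : Set E, IsOpen V → IsCompact (closure V) → closure V ⊆ U →
      ∃ C σ : ℝ, 0 < C ∧ 0 < σ ∧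
        ∀ x ∈ V, ∀ k : ℕ, ‖iteratedFDerivWithin ℝ k f U x‖ ≤ C * σ ^ k * M k

/-- `f` is of class `E^{(M)}` (Beurling) on the open set `U`. -/
def BeurlingOn {E : Type*} [NormedAddCommGroup E] [NormedSpace ℝ E]
    (M : ℕ → ℝ) (f : E → ℂ) (U : Set E) : Prop :=
  ContDiffOn ℝ (⊤ : ℕ∞) f U ∧
    ∀ V : Set E, IsOpen V → IsCompact (closure V) → closure V ⊆ U →
      ∀ σ : ℝ, 0 < σ → ∃ C : ℝ, 0 < C ∧
        ∀ x ∈ V, ∀ k : ℕ, ‖iteratedFDerivWithin ℝ k f U x‖ ≤ C * σ ^ k * M k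

/-- A weight matrix: a nonempty, pointwise totally ordered family of weight sequences. -/
def IsWeightMatrix (W : Set (ℕ → ℝ)) : Prop :=
  W.Nonempty ∧ (∀ M ∈ W, IsWeightSeq M) ∧
    ∀ M ∈ W, ∀ N ∈ W, (∀ k, M k ≤ N k) ∨ (∀ k, N k ≤ M k)

/-- R-regularity of a weight matrix. -/
def RRegular (W : Set (ℕ → ℝ)) : Prop :=
  (∀ M ∈ W, RootTendsToInfty (mseq M)) ∧
    (∀ M ∈ W, ∃ N ∈ W, ∃ C : ℝ, 1 ≤ C ∧ ∀ j : ℕ, M (j + 1) ≤ C ^ (j + 1) * N j) ∧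
    (∀ M ∈ W, ∃ N ∈ W, ∃ C : ℝ, 1 ≤ C ∧
      ∀ t : ℝ, 0 < t → GammaBar (mseq N) (C * t) ≤ GammaLow (mseq M) t)

/-- B-regularity of a weight matrix. -/
def BRegular (W : Set (ℕ → ℝ)) : Prop :=
  (∀ M ∈ W, RootTendsToInfty (mseq M)) ∧
    (∀ M ∈ W, ∃ N ∈ W, ∃ C : ℝ, 1 ≤ C ∧ ∀ j : ℕ, N (j + 1) ≤ C ^ j * M j) ∧
    (∀ M ∈ W, ∃ N ∈ W, ∃ C : ℝ, 1 ≤ C ∧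
      ∀ t : ℝ, 0 < t → GammaBar (mseq M) (C * t) ≤ GammaLow (mseq N) t)

/-- R-moderate growth of a weight matrix. -/
def RModerateGrowth (W : Set (ℕ → ℝ)) : Prop := ∀ M ∈ W, ∃ N ∈ W, MgFinite M N

/-- B-moderate growth of a weight matrix. -/
def BModerateGrowth (W : Set (ℕ → ℝ)) : Prop := ∀ M ∈ W, ∃ N ∈ W, MgFinite N M

/-- `f` is of class `E^{W}` (Roumieu, weight matrix) on the open set `U`. -/
def MatrixRoumieuOn {E : Type*} [NormedAddCommGroup E] [NormedSpace ℝ E]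
    (W : Set (ℕ → ℝ)) (f : E → ℂ) (U : Set E) : Prop :=
  ContDiffOn ℝ (⊤ : ℕ∞) f U ∧
    ∀ V : Set E, IsOpen V → IsCompact (closure V) → closure V ⊆ U →
      ∃ M ∈ W, ∃ C σ : ℝ, 0 < C ∧ 0 < σ ∧
        ∀ x ∈ V, ∀ k : ℕ, ‖iteratedFDerivWithin ℝ k f U x‖ ≤ C * σ ^ k * M k

/-- `f` is of class `E^{(W)}` (Beurling, weight matrix) on the open set `U`. -/
def MatrixBeurlingOn {E : Type*} [NormedAddCommGroup E] [NormedSpace ℝ E]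
    (W : Set (ℕ → ℝ)) (f : E → ℂ) (U : Set E) : Prop :=
  ContDiffOn ℝ (⊤ : ℕ∞) f U ∧
    ∀ V : Set E, IsOpen V → IsCompact (closure V) → closure V ⊆ U →
      ∀ M ∈ W, ∀ σ : ℝ, 0 < σ → ∃ C : ℝ, 0 < C ∧
        ∀ x ∈ V, ∀ k : ℕ, ‖iteratedFDerivWithin ℝ k f U x‖ ≤ C * σ ^ k * M k

/-- `ω` is a weight function. -/
def IsWeightFunction (ω : ℝ → ℝ) : Prop :=
  ContinuousOn ω (Ici 0) ∧ MonotoneOn ω (Ici 0) ∧ (∀ t ∈ Ici (0 : ℝ), 0 ≤ ω t) ∧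
    ((fun t => ω (2 * t)) =O[atTop] ω) ∧ (ω =o[atTop] fun t : ℝ => t) ∧
    ((fun t => Real.log t) =o[atTop] ω) ∧ ConvexOn ℝ (Ici 0) fun t => ω (Real.exp t)

/-- The Young conjugate `φ*_ω (s) = sup_{t ≥ 0} (s t - ω (e^t))`. -/
def phiStar (ω : ℝ → ℝ) (s : ℝ) : ℝ := sSup ((fun t => s * t - ω (Real.exp t)) '' Ici 0)

/-- Non-quasianalyticity of a weight function. -/
def NonQuasianalyticW (ω : ℝ → ℝ) : Prop := IntegrableOn (fun t => ω t / t ^ 2) (Ici 1)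

/-- `f` is of class `E^{ω}` (Roumieu) on the open set `U`. -/
def OmegaRoumieuOn {E : Type*} [NormedAddCommGroup E] [NormedSpace ℝ E]
    (ω : ℝ → ℝ) (f : E → ℂ) (U : Set E) : Prop :=
  ContDiffOn ℝ (⊤ : ℕ∞) f U ∧
    ∀ V : Set E, IsOpen V → IsCompact (closure V) → closure V ⊆ U →
      ∃ C ρ : ℝ, 0 < C ∧ 0 < ρ ∧
        ∀ x ∈ V, ∀ k : ℕ,
          ‖iteratedFDerivWithin ℝ k f U x‖ ≤ C * Real.exp (phiStar ω (ρ * k) / ρ)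

/-- `f` is of class `E^{(ω)}` (Beurling) on the open set `U`. -/
def OmegaBeurlingOn {E : Type*} [NormedAddCommGroup E] [NormedSpace ℝ E]
    (ω : ℝ → ℝ) (f : E → ℂ) (U : Set E) : Prop :=
  ContDiffOn ℝ (⊤ : ℕ∞) f U ∧
    ∀ V : Set E, IsOpen V → IsCompact (closure V) → closure V ⊆ U →
      ∀ ρ : ℝ, 0 < ρ → ∃ C : ℝ, 0 < C ∧
        ∀ x ∈ V, ∀ k : ℕ,
          ‖iteratedFDerivWithin ℝ k f U x‖ ≤ C * Real.exp (phiStar ω (ρ * k) / ρ)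

/-- The open ellipse `Ω_ε` with vertices `± cosh ε` and co-vertices `± i sinh ε`. -/
def OmegaE (ε : ℝ) : Set ℂ :=
  {z : ℂ | (z.re / Real.cosh ε) ^ 2 + (z.im / Real.sinh ε) ^ 2 < 1}

/-- The sequence space `Λ^{M}`. -/
def Lambda (M : ℕ → ℝ) : Set (ℕ → ℂ) :=
  {c | ∃ ρ : ℝ, 0 < ρ ∧ ∃ C : ℝ, ∀ k, ‖c k‖ ≤ C * ρ ^ k * M k}

/-- `L(M)`: all non-quasianalytic weight sequences `N ≥ M` with `n = N/k!` log-convex. -/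
def LM (M : ℕ → ℝ) : Set (ℕ → ℝ) :=
  {N | IsWeightSeq N ∧ NonQuasianalytic N ∧ (∀ k, M k ≤ N k) ∧ LogConvexSeq (mseq N)}

/-- A quasianalytic weight sequence `M` is intersectable if `Λ^{M} = ⋂_{N ∈ L(M)} Λ^{N}`. -/
def Intersectable (M : ℕ → ℝ) : Prop := Lambda M = ⋂ N ∈ LM M, Lambda N

/-!
At a small scale `l` replace `f ^ j` and `f ^ (j + 1)` by Taylor polynomials `P` and `Q` of degree
less than `p`, chosen so that the error `δ` is exponentially small in `p`. On the real axis
`P ^ (j + 1)` and `Q ^ j` almost coincide, both being close to `f ^ (j * (j + 1))`; by a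
two-constants estimate they still almost coincide on a complex disc. The candidate for `f` is
`Q / P`, regularised to `Q * conj P / (|P| ^ 2 + ρ ^ 2)` since `P` may vanish. Its `∂̄`-derivative
is small, because `|Q|` is comparable with `|P| ^ ((j + 1) / j)` and because the logarithmic
derivative `P' / P = ∑ 1 / (z - a)` is integrable with a norm linear in the degree. Subtracting a
Cauchy transform gives a holomorphic function with an error that is a power of `δ`.

So at every point and every dyadic scale `f` is close to a bounded holomorphic function. A
two-constants estimate for the difference at consecutive scales, followed by Cauchy's estimates,
makes the derivatives of the approximants converge, which yields the smoothness of `f` together with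
the bounds. Passing from `δ` to a power of `δ` costs a factor `32 * j * (j + 1)` in the exponent,
which is paid for by the moderate growth conditions: each of them doubles the exponent.
-/

section TwoConstants

open Metric Complex.HadamardThreeLines

lemma norm_cosh_le_cosh_re (s : ℂ) : ‖Complex.cosh s‖ ≤ Real.cosh s.re := by
  have h := norm_add_le (Complex.exp s) (Complex.exp (-s))
  rw [Complex.norm_exp, Complex.norm_exp, Complex.neg_re] at h
  rw [Complex.cosh, norm_div, Real.cosh_eq, Complex.norm_ofNat]
  linarith

lemma sinh_re_le_norm_cosh (s : ℂ) : Real.sinh s.re ≤ ‖Complex.cosh s‖ := by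
  have h := norm_sub_norm_le (Complex.exp s) (-Complex.exp (-s))
  rw [norm_neg, sub_neg_eq_add, Complex.norm_exp, Complex.norm_exp, Complex.neg_re] at h
  rw [Complex.cosh, norm_div, Real.sinh_eq, Complex.norm_ofNat]
  linarith

lemma exists_cosh_eq_of_norm_le (z : ℂ) :
    ∃ s : ℂ, Complex.cosh s = z ∧ 0 ≤ s.re ∧ s.re ≤ ‖z‖ := by
  obtain ⟨s, rfl, hs⟩ : ∃ s : ℂ, Complex.cosh s = z ∧ 0 ≤ s.re := by
    obtain ⟨s, hs⟩ := Complex.cos_surjective z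
    rw [← Complex.cosh_mul_I] at hs
    rcases le_total 0 (s * Complex.I).re with h | h
    · exact ⟨_, hs, h⟩
    · exact ⟨-(s * Complex.I), by rw [Complex.cosh_neg, hs], by simpa using h⟩
  exact ⟨s, rfl, hs, (Real.self_le_sinh_iff.2 hs).trans (sinh_re_le_norm_cosh s)⟩

lemma cosh_mem_ball_two {s : ℂ} (hs : s.re ∈ Icc (0 : ℝ) 1) :
    Complex.cosh s ∈ ball (0 : ℂ) 2 := by
  rw [mem_ball_zero_iff]
  have hmono : Real.cosh s.re ≤ Real.cosh 1 := by
    rw [Real.cosh_le_cosh, abs_of_nonneg hs.1, abs_one]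
    exact hs.2
  have hone : Real.cosh 1 < 2 := by
    rw [Real.cosh_eq]
    linarith [Real.exp_one_lt_d9, Real.exp_lt_one_iff.2 (show (-1 : ℝ) < 0 by norm_num)]
  exact (norm_cosh_le_cosh_re s).trans_lt (hmono.trans_lt hone)

lemma cosh_eq_ofReal_cos_im {s : ℂ} (hs : s.re = 0) : Complex.cosh s = (Real.cos s.im : ℂ) := by
  have : s = s.im * Complex.I := Complex.ext (by simp [hs]) (by simp)
  rw [this, Complex.cosh_mul_I]
  simp

lemma rpow_mul_rpow_le_sqrt {e K t : ℝ} (he : 0 ≤ e) (heK : e ≤ K) (ht : t ≤ 1 / 2) :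
    e ^ (1 - t) * K ^ t ≤ √(K * e) := by
  rcases he.eq_or_lt with rfl | he
  · rw [Real.zero_rpow (by linarith)]
    simp
  have hK : 0 < K := he.trans_le heK
  calc e ^ (1 - t) * K ^ t = e ^ (1 / 2 : ℝ) * e ^ (1 / 2 - t) * K ^ t := by
        rw [← Real.rpow_add he]
        ring_nf
    _ ≤ e ^ (1 / 2 : ℝ) * K ^ (1 / 2 - t) * K ^ t := by gcongr
    _ = √(K * e) := by
        rw [mul_assoc, ← Real.rpow_add hK, sub_add_cancel, Real.sqrt_eq_rpow,
          Real.mul_rpow hK.le he.le, mul_comm]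

variable {E : Type*} [NormedAddCommGroup E] [NormedSpace ℂ E]

/- `cosh` maps the strip `0 ≤ re s ≤ 1` into the disc of radius two and its edge `re s = 0` onto
`[-1, 1]`, which turns Hadamard's three lines theorem into a two constants theorem. -/
lemma norm_le_sqrt_of_norm_le_on_unitInterval {G : ℂ → E} {K e : ℝ}
    (hG : DifferentiableOn ℂ G (ball 0 2)) (hK : ∀ z ∈ ball (0 : ℂ) 2, ‖G z‖ ≤ K)
    (he : ∀ y : ℝ, |y| ≤ 1 → ‖G y‖ ≤ e) {z : ℂ} (hz : ‖z‖ ≤ 1 / 2) : ‖G z‖ ≤ √(K * e) := by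
  have he₀ : 0 ≤ e := (norm_nonneg _).trans (he 0 (by simp))
  rcases le_total K e with hKe | heK
  · have hGz : ‖G z‖ ≤ K := hK z (by rw [mem_ball_zero_iff]; linarith)
    exact Real.le_sqrt_of_sq_le (by nlinarith [norm_nonneg (G z)])
  obtain ⟨s, rfl, hs₀, hsz⟩ := exists_cosh_eq_of_norm_le z
  refine le_trans ?_ (rpow_mul_rpow_le_sqrt he₀ heK (hsz.trans hz))
  have hd : DifferentiableOn ℂ (fun s => G (Complex.cosh s)) (verticalClosedStrip 0 1) :=
    hG.comp Complex.differentiable_cosh.differentiableOn fun w hw => cosh_mem_ball_two hw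
  have hcl : closure (verticalStrip 0 1) ⊆ verticalClosedStrip 0 1 :=
    closure_minimal (preimage_mono Ioo_subset_Icc_self)
      (isClosed_Icc.preimage Complex.continuous_re)
  refine norm_le_interp_of_mem_verticalClosedStrip₀₁' (fun s => G (Complex.cosh s))
    ⟨hs₀, by linarith⟩ (hd.mono hcl).diffContOnCl ?_ ?_ ?_
  · refine ⟨K, ?_⟩
    rintro _ ⟨w, hw, rfl⟩
    exact hK _ (cosh_mem_ball_two hw)
  · intro w hw
    rw [cosh_eq_ofReal_cos_im hw]
    exact he _ (Real.abs_cos_le_one _)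
  · intro w hw
    have hw : w.re = 1 := hw
    exact hK _ (cosh_mem_ball_two (by rw [hw]; simp))

lemma norm_le_sqrt_of_norm_le_on_real {G : ℂ → E} {x r K e : ℝ} (hr : 0 < r)
    (hG : DifferentiableOn ℂ G (ball (x : ℂ) (2 * r)))
    (hK : ∀ z ∈ ball (x : ℂ) (2 * r), ‖G z‖ ≤ K)
    (he : ∀ y : ℝ, |y - x| ≤ r → ‖G y‖ ≤ e) {z : ℂ} (hz : ‖z - x‖ ≤ r / 2) :
    ‖G z‖ ≤ √(K * e) := by
  have hmaps : MapsTo (fun w : ℂ => (x : ℂ) + r * w) (ball 0 2) (ball (x : ℂ) (2 * r)) := by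
    intro w hw
    rw [mem_ball_zero_iff] at hw
    rw [mem_ball, dist_eq_norm, add_sub_cancel_left, norm_mul, Complex.norm_real,
      Real.norm_eq_abs, abs_of_pos hr]
    nlinarith
  have hr' : (r : ℂ) ≠ 0 := by exact_mod_cast hr.ne'
  have hz' : (x : ℂ) + r * ((z - x) / r) = z := by field_simp; ring
  rw [← hz']
  refine norm_le_sqrt_of_norm_le_on_unitInterval (G := fun w => G (x + r * w))
    (hG.comp (by fun_prop) hmaps) (fun w hw => hK _ (hmaps hw)) (fun y hy => ?_) ?_
  · have hy' : |x + r * y - x| ≤ r := by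
      rw [add_sub_cancel_left, abs_mul, abs_of_pos hr]
      nlinarith
    exact_mod_cast he (x + r * y) hy'
  · rw [norm_div, Complex.norm_real, Real.norm_eq_abs, abs_of_pos hr, div_le_iff₀ hr]
    linarith

end TwoConstants

section HolomorphicApproximation

open Metric

/-- `G` is a holomorphic approximation of `f` at the real point `x`: on the disc of radius `r`
about `x` it is holomorphic and bounded by `K`, and on the real points of this disc it is within
`e` of `f`. -/
structure IsHolomorphicApprox (f : ℝ → ℂ) (x r K e : ℝ) (G : ℂ → ℂ) : Prop where
  differentiableOn : DifferentiableOn ℂ G (ball x r)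
  norm_le : ∀ z ∈ ball (x : ℂ) r, ‖G z‖ ≤ K
  norm_sub_le : ∀ y : ℝ, |y - x| < r → ‖G y - f y‖ ≤ e

namespace IsHolomorphicApprox

variable {f : ℝ → ℂ} {x y r s K e e' e₁ e₂ : ℝ} {G G₁ G₂ : ℂ → ℂ}

lemma mono_right (h : IsHolomorphicApprox f x r K e G) (he : e ≤ e') :
    IsHolomorphicApprox f x r K e' G :=
  ⟨h.differentiableOn, h.norm_le, fun y hy => (h.norm_sub_le y hy).trans he⟩

lemma restrict (h : IsHolomorphicApprox f x r K e G) (hs : s + |y - x| ≤ r) :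
    IsHolomorphicApprox f y s K e G := by
  have hball : ball (y : ℂ) s ⊆ ball (x : ℂ) r := by
    apply ball_subset_ball'
    rwa [Complex.dist_eq, ← Complex.ofReal_sub, Complex.norm_real, Real.norm_eq_abs]
  refine ⟨h.differentiableOn.mono hball, fun z hz => h.norm_le z (hball hz), fun t ht => ?_⟩
  exact h.norm_sub_le t (by linarith [abs_sub_le t y x])

lemma norm_iteratedDeriv_le (h : IsHolomorphicApprox f x r K e G) (hr : 0 < r) (a : ℕ) :
    ‖iteratedDeriv a G x‖ ≤ a.factorial * (2 / r) ^ a * K := by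
  have hsub : closedBall (x : ℂ) (r / 2) ⊆ ball (x : ℂ) r :=
    closedBall_subset_ball (by linarith)
  refine (Complex.norm_iteratedDeriv_le_of_forall_mem_sphere_norm_le a (half_pos hr)
    ((h.differentiableOn.mono (closure_ball_subset_closedBall.trans hsub)).diffContOnCl)
    (fun z hz => h.norm_le z (hsub (sphere_subset_closedBall hz)))).trans_eq ?_
  rw [← inv_div r, inv_pow]
  ring

lemma norm_iteratedDeriv_sub_le (h₁ : IsHolomorphicApprox f x r K e₁ G₁)
    (h₂ : IsHolomorphicApprox f x r K e₂ G₂) (hr : 0 < r) (a : ℕ) :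
    ‖iteratedDeriv a G₁ x - iteratedDeriv a G₂ x‖ ≤
      a.factorial * (4 / r) ^ a * √(2 * K * (e₁ + e₂)) := by
  have hd : DifferentiableOn ℂ (G₁ - G₂) (ball (x : ℂ) r) :=
    h₁.differentiableOn.sub h₂.differentiableOn
  have hbound : ∀ z ∈ ball (x : ℂ) r, ‖(G₁ - G₂) z‖ ≤ 2 * K := fun z hz => by
    simpa [two_mul] using norm_sub_le_of_le (h₁.norm_le z hz) (h₂.norm_le z hz)
  have hreal : ∀ s : ℝ, |s - x| ≤ r / 2 → ‖(G₁ - G₂) s‖ ≤ e₁ + e₂ := fun s hs => by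
    have hs : |s - x| < r := by linarith
    simpa using norm_sub_le_of_le (h₁.norm_sub_le s hs) (h₂.norm_sub_le s hs)
  have hcompl : ∀ z : ℂ, ‖z - x‖ ≤ r / 4 → ‖(G₁ - G₂) z‖ ≤ √(2 * K * (e₁ + e₂)) := fun z hz => by
    have hr2 : 2 * (r / 2) = r := by ring
    exact norm_le_sqrt_of_norm_le_on_real (half_pos hr) (by rwa [hr2]) (by rwa [hr2]) hreal
      (by linarith)
  have hmem : ball (x : ℂ) r ∈ nhds (x : ℂ) := ball_mem_nhds _ hr
  rw [← iteratedDeriv_sub (h₁.differentiableOn.analyticAt hmem).contDiffAt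
    (h₂.differentiableOn.analyticAt hmem).contDiffAt]
  have hsub : closedBall (x : ℂ) (r / 4) ⊆ ball (x : ℂ) r :=
    closedBall_subset_ball (by linarith)
  refine (Complex.norm_iteratedDeriv_le_of_forall_mem_sphere_norm_le a (show 0 < r / 4 by linarith)
    ((hd.mono (closure_ball_subset_closedBall.trans hsub)).diffContOnCl)
    (fun z hz => hcompl z (mem_sphere_iff_norm.1 hz).le)).trans_eq ?_
  rw [← inv_div r, inv_pow]
  ring

lemma hasDerivAt_iteratedDeriv (h : IsHolomorphicApprox f x r K e G) (a : ℕ)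
    (hy : |y - x| < r) :
    HasDerivAt (fun t : ℝ => iteratedDeriv a G t) (iteratedDeriv (a + 1) G y) y := by
  have hmem : (y : ℂ) ∈ ball (x : ℂ) r := by
    rwa [mem_ball, Complex.dist_eq, ← Complex.ofReal_sub, Complex.norm_real, Real.norm_eq_abs]
  have hanalytic : AnalyticAt ℂ (iteratedDeriv a G) y := by
    rw [iteratedDeriv_eq_iterate]
    exact (h.differentiableOn.analyticAt (isOpen_ball.mem_nhds hmem)).iterated_deriv a
  rw [iteratedDeriv_succ]
  exact hanalytic.differentiableAt.hasDerivAt.comp_ofReal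

end IsHolomorphicApprox

end HolomorphicApproximation

section RealDifferentiability

open scoped Topology

variable {E : Type*} [NormedAddCommGroup E] [NormedSpace ℝ E]

lemma norm_taylor_two_le {H₀ H₁ H₂ : ℝ → E} {x y B : ℝ}
    (h₀ : ∀ s ∈ uIcc x y, HasDerivAt H₀ (H₁ s) s) (h₁ : ∀ s ∈ uIcc x y, HasDerivAt H₁ (H₂ s) s)
    (hB : ∀ s ∈ uIcc x y, ‖H₂ s‖ ≤ B) :
    ‖H₀ y - H₀ x - (y - x) • H₁ x‖ ≤ B * |y - x| ^ 2 := by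
  have hB₀ : 0 ≤ B := (norm_nonneg _).trans (hB x left_mem_uIcc)
  have hfirst : ∀ s ∈ uIcc x y, ‖H₁ s - H₁ x‖ ≤ B * |y - x| := fun s hs =>
    ((convex_uIcc x y).norm_image_sub_le_of_norm_hasDerivWithin_le
      (fun t ht => (h₁ t ht).hasDerivWithinAt) hB left_mem_uIcc hs).trans
      (mul_le_mul_of_nonneg_left (abs_sub_left_of_mem_uIcc hs) hB₀)
  have hsecond := (convex_uIcc x y).norm_image_sub_le_of_norm_hasDerivWithin_le
    (f := fun s : ℝ => H₀ s - s • H₁ x) (f' := fun s => H₁ s - H₁ x)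
    (fun t ht => by
      simpa using ((h₀ t ht).fun_sub ((hasDerivAt_id t).smul_const (H₁ x))).hasDerivWithinAt)
    hfirst left_mem_uIcc right_mem_uIcc
  calc ‖H₀ y - H₀ x - (y - x) • H₁ x‖ = ‖H₀ y - y • H₁ x - (H₀ x - x • H₁ x)‖ := by
        rw [sub_smul]
        abel_nf
    _ ≤ B * |y - x| ^ 2 := hsecond.trans_eq (by rw [Real.norm_eq_abs]; ring)

lemma hasDerivAt_of_norm_sub_le_sq {F : ℝ → E} {F' : E} {x δ Q : ℝ} (hδ : 0 < δ)
    (h : ∀ y, |y - x| < δ → ‖F y - F x - (y - x) • F'‖ ≤ Q * |y - x| ^ 2) :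
    HasDerivAt F F' x := by
  rw [hasDerivAt_iff_isLittleO]
  have hquad : (fun y => F y - F x - (y - x) • F') =O[𝓝 x] (fun y => (y - x) ^ 2) := by
    refine IsBigO.of_bound Q ?_
    filter_upwards [Metric.ball_mem_nhds x hδ] with y hy
    simpa only [norm_pow, Real.norm_eq_abs] using h y hy
  refine hquad.trans_isLittleO ?_
  have hsmall : (fun y : ℝ => y - x) =o[𝓝 x] (fun _ => (1 : ℝ)) := by
    rw [isLittleO_one_iff]
    simpa using (continuous_sub_right x).tendsto x
  simpa only [pow_two, one_mul] using hsmall.mul_isBigO (isBigO_refl (fun y : ℝ => y - x) (𝓝 x))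

lemma hasDerivAt_of_forall_exists_approx {F : ℝ → E} {F' : E} {x δ B R : ℝ} (hδ : 0 < δ)
    (h : ∀ y, y ≠ x → |y - x| < δ → ∃ H₀ H₁ H₂ : ℝ → E,
      (∀ s ∈ uIcc x y, HasDerivAt H₀ (H₁ s) s) ∧ (∀ s ∈ uIcc x y, HasDerivAt H₁ (H₂ s) s) ∧
      (∀ s ∈ uIcc x y, ‖H₂ s‖ ≤ B) ∧ ‖H₀ y - F y‖ ≤ R * |y - x| ^ 2 ∧
      ‖H₀ x - F x‖ ≤ R * |y - x| ^ 2 ∧ ‖H₁ x - F'‖ ≤ R * |y - x|) :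
    HasDerivAt F F' x := by
  refine hasDerivAt_of_norm_sub_le_sq (Q := B + 3 * R) hδ fun y hy => ?_
  rcases eq_or_ne y x with rfl | hyx
  · simp
  obtain ⟨H₀, H₁, H₂, h₀, h₁, hB, hFy, hFx, hF'⟩ := h y hyx hy
  have hsplit : F y - F x - (y - x) • F' = (H₀ y - H₀ x - (y - x) • H₁ x) -
      (H₀ y - F y) + (H₀ x - F x) + (y - x) • (H₁ x - F') := by
    rw [smul_sub]
    abel
  have hlin : ‖(y - x) • (H₁ x - F')‖ ≤ R * |y - x| ^ 2 := by
    rw [norm_smul, Real.norm_eq_abs]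
    nlinarith [abs_nonneg (y - x)]
  calc ‖F y - F x - (y - x) • F'‖
      ≤ B * |y - x| ^ 2 + R * |y - x| ^ 2 + R * |y - x| ^ 2 + R * |y - x| ^ 2 := by
        rw [hsplit]
        exact norm_add_le_of_le (norm_add_le_of_le
          (norm_sub_le_of_le (norm_taylor_two_le h₀ h₁ hB) hFy) hFx) hlin
    _ = (B + 3 * R) * |y - x| ^ 2 := by ring

lemma iteratedDeriv_eq_of_hasDerivAt {F : ℕ → ℝ → E} {J : Set ℝ} (hJ : IsOpen J)
    (hF : ∀ a, ∀ x ∈ J, HasDerivAt (F a) (F (a + 1) x) x) (a : ℕ) :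
    ∀ x ∈ J, iteratedDeriv a (F 0) x = F a x := by
  induction a with
  | zero => simp
  | succ a ih =>
    intro x hx
    have heq : iteratedDeriv a (F 0) =ᶠ[𝓝 x] F a := eventually_of_mem (hJ.mem_nhds hx) ih
    rw [iteratedDeriv_succ, heq.deriv_eq, (hF a x hx).deriv]

lemma contDiffOn_of_hasDerivAt {F : ℕ → ℝ → E} {J : Set ℝ} (hJ : IsOpen J)
    (hF : ∀ a, ∀ x ∈ J, HasDerivAt (F a) (F (a + 1) x) x) : ContDiffOn ℝ (⊤ : ℕ∞) (F 0) J := by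
  refine contDiffOn_of_differentiableOn_deriv fun a _ x hx => ?_
  have heq : iteratedDerivWithin a (F 0) J =ᶠ[𝓝 x] F a :=
    eventually_of_mem (hJ.mem_nhds hx) fun y hy => by
      rw [iteratedDerivWithin_of_isOpen hJ hy, iteratedDeriv_eq_of_hasDerivAt hJ hF a y hy]
  exact (heq.differentiableAt_iff.2 (hF a x hx).differentiableAt).differentiableWithinAt

end RealDifferentiability

section DyadicGluing

lemma exists_dyadic_scale {r d : ℝ} (hd : 0 < d) (h : d ≤ r / 2) :
    ∃ i : ℕ, d ≤ r / 2 ^ i / 2 ∧ r / 2 ^ i ≤ 4 * d := by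
  have hone : 1 ≤ r / (2 * d) := by
    rw [le_div_iff₀ (by positivity)]
    linarith
  obtain ⟨i, hi, hi'⟩ := exists_nat_pow_near hone one_lt_two
  rw [le_div_iff₀ (by positivity)] at hi
  rw [div_lt_iff₀ (by positivity), pow_succ] at hi'
  exact ⟨i, by rw [div_div, le_div_iff₀ (by positivity)]; linarith,
    by rw [div_le_iff₀ (by positivity)]; linarith⟩

/-- The family `G i x` approximates `f` holomorphically at every point `x` of `J` and every scale
`r / 2 ^ i`, with errors decaying so fast, as measured by the sequence `w`, that derivatives of
every order of the `G i x` converge as `i → ∞`. -/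
structure IsDyadicApprox (f : ℝ → ℂ) (J : Set ℝ) (r K C D : ℝ) (w : ℕ → ℝ)
    (G : ℕ → ℝ → ℂ → ℂ) : Prop where
  scale_pos : 0 < r
  bound_nonneg : 0 ≤ K
  const_nonneg : 0 ≤ C
  rate_nonneg : 0 ≤ D
  weight_nonneg : ∀ b, 0 ≤ w b
  approx : ∀ i b : ℕ, ∀ x ∈ J, IsHolomorphicApprox f x (r / 2 ^ i) K
    ((C * (1 / 2) ^ i * (w b * (D * (r / 2 ^ i)) ^ b)) ^ 2) (G i x)

namespace IsDyadicApprox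

open scoped Topology

/-- The limit as `i → ∞` of the `a`-th derivative at `x` of the approximation `G i x`. -/
def derivLimit (G : ℕ → ℝ → ℂ → ℂ) (a : ℕ) (x : ℝ) : ℂ :=
  limUnder atTop fun i => iteratedDeriv a (G i x) x

/-- The constant controlling, up to the factor `(r / 2 ^ i) ^ c`, how much the `a`-th derivative
changes between approximations at scale `r / 2 ^ i`; the freedom in `c` trades orders of `w` for
powers of the scale. -/
def jumpConst (K C D : ℝ) (w : ℕ → ℝ) (a c : ℕ) : ℝ :=
  2 * √K * C * a.factorial * 8 ^ a * w (a + c) * D ^ (a + c)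

variable {f : ℝ → ℂ} {J : Set ℝ} {r K C D : ℝ} {w : ℕ → ℝ} {G : ℕ → ℝ → ℂ → ℂ} {x y : ℝ}

lemma jumpConst_nonneg (h : IsDyadicApprox f J r K C D w G) (a c : ℕ) :
    0 ≤ jumpConst K C D w a c := by
  have hC := h.const_nonneg
  have hD := h.rate_nonneg
  have hw := h.weight_nonneg (a + c)
  unfold jumpConst
  positivity

lemma scale_div_pos (h : IsDyadicApprox f J r K C D w G) (i : ℕ) : 0 < r / 2 ^ i :=
  div_pos h.scale_pos (by positivity)

lemma approx_half (h : IsDyadicApprox f J r K C D w G) (hx : x ∈ J) {i : ℕ}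
    (hxy : |y - x| ≤ r / 2 ^ i / 2) (b : ℕ) : IsHolomorphicApprox f y (r / 2 ^ i / 2) K
      ((C * (1 / 2) ^ i * (w b * (D * (r / 2 ^ i)) ^ b)) ^ 2) (G i x) :=
  (h.approx i b x hx).restrict (by linarith)

lemma approx_half_self (h : IsDyadicApprox f J r K C D w G) (hx : x ∈ J) (i b : ℕ) :
    IsHolomorphicApprox f x (r / 2 ^ i / 2) K
      ((C * (1 / 2) ^ i * (w b * (D * (r / 2 ^ i)) ^ b)) ^ 2) (G i x) :=
  h.approx_half hx (by rw [sub_self, abs_zero]; exact (half_pos (h.scale_div_pos i)).le) b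

lemma approx_succ (h : IsDyadicApprox f J r K C D w G) (hx : x ∈ J) (i b : ℕ) :
    IsHolomorphicApprox f x (r / 2 ^ i / 2) K
      ((C * (1 / 2) ^ i * (w b * (D * (r / 2 ^ i)) ^ b)) ^ 2) (G (i + 1) x) := by
  have hr := h.scale_pos
  have hC := h.const_nonneg
  have hD := h.rate_nonneg
  have hw := h.weight_nonneg b
  have hsucc : (2 : ℝ) ^ i ≤ 2 ^ (i + 1) := pow_le_pow_right₀ one_le_two i.le_succ
  rw [div_div, ← pow_succ]
  refine (h.approx (i + 1) b x hx).mono_right ?_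
  simp only [one_div, inv_pow]
  gcongr

lemma sqrt_add_sq_eq {K E : ℝ} (hK : 0 ≤ K) (hE : 0 ≤ E) :
    √(2 * K * (E ^ 2 + E ^ 2)) = 2 * √K * E := by
  rw [show 2 * K * (E ^ 2 + E ^ 2) = K * (2 * E) ^ 2 by ring, Real.sqrt_mul hK,
    Real.sqrt_sq (by positivity)]
  ring

lemma norm_iteratedDeriv_sub_le (h : IsDyadicApprox f J r K C D w G) {G₁ G₂ : ℂ → ℂ} {i : ℕ}
    (h₁ : ∀ b, IsHolomorphicApprox f x (r / 2 ^ i / 2) K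
      ((C * (1 / 2) ^ i * (w b * (D * (r / 2 ^ i)) ^ b)) ^ 2) G₁)
    (h₂ : ∀ b, IsHolomorphicApprox f x (r / 2 ^ i / 2) K
      ((C * (1 / 2) ^ i * (w b * (D * (r / 2 ^ i)) ^ b)) ^ 2) G₂) (a c : ℕ) :
    ‖iteratedDeriv a G₁ x - iteratedDeriv a G₂ x‖ ≤
      jumpConst K C D w a c * (r / 2 ^ i) ^ c / 2 ^ i := by
  have hC := h.const_nonneg
  have hD := h.rate_nonneg
  have hw := h.weight_nonneg (a + c)
  have hℓ := h.scale_div_pos i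
  refine ((h₁ (a + c)).norm_iteratedDeriv_sub_le (h₂ (a + c)) (half_pos hℓ) a).trans_eq ?_
  rw [sqrt_add_sq_eq h.bound_nonneg (by positivity), jumpConst]
  generalize r / 2 ^ i = ℓ at hℓ
  rw [show 4 / (ℓ / 2) = 8 / ℓ by field_simp; norm_num, div_pow, mul_pow, pow_add ℓ, one_div,
    inv_pow]
  field_simp

lemma dist_iteratedDeriv_succ_le (h : IsDyadicApprox f J r K C D w G) (hx : x ∈ J) (a c i : ℕ) :
    dist (iteratedDeriv a (G i x) x) (iteratedDeriv a (G (i + 1) x) x) ≤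
      jumpConst K C D w a c * (r / 2 ^ i) ^ c / 2 ^ i := by
  rw [dist_eq_norm]
  exact h.norm_iteratedDeriv_sub_le (h.approx_half_self hx i) (h.approx_succ hx i) a c

lemma dist_iteratedDeriv_add_succ_le (h : IsDyadicApprox f J r K C D w G) (hx : x ∈ J)
    (a c i n : ℕ) :
    dist (iteratedDeriv a (G (i + n) x) x) (iteratedDeriv a (G (i + n + 1) x) x) ≤
      2 * (jumpConst K C D w a c * (r / 2 ^ i) ^ c) / 2 / 2 ^ n := by
  refine (h.dist_iteratedDeriv_succ_le hx a c (i + n)).trans ?_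
  have hconst := h.jumpConst_nonneg a c
  have hr := h.scale_pos
  have hi : (2 : ℝ) ^ i ≤ 2 ^ (i + n) := pow_le_pow_right₀ one_le_two (i.le_add_right n)
  have hn : (2 : ℝ) ^ n ≤ 2 ^ (i + n) := pow_le_pow_right₀ one_le_two (n.le_add_left i)
  rw [mul_div_cancel_left₀ _ (two_ne_zero (α := ℝ))]
  gcongr

lemma tendsto_derivLimit (h : IsDyadicApprox f J r K C D w G) (hx : x ∈ J) (a : ℕ) :
    Tendsto (fun i => iteratedDeriv a (G i x) x) atTop (𝓝 (derivLimit G a x)) :=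
  (cauchySeq_of_le_geometric_two fun n => by
    simpa only [zero_add] using h.dist_iteratedDeriv_add_succ_le hx a 0 0 n).tendsto_limUnder

lemma norm_iteratedDeriv_sub_derivLimit_le (h : IsDyadicApprox f J r K C D w G) (hx : x ∈ J)
    (a c i : ℕ) :
    ‖iteratedDeriv a (G i x) x - derivLimit G a x‖ ≤
      2 * (jumpConst K C D w a c * (r / 2 ^ i) ^ c) := by
  have hlim : Tendsto (fun n => iteratedDeriv a (G (i + n) x) x) atTop (𝓝 (derivLimit G a x)) := by
    simpa only [add_comm i] using (tendsto_add_atTop_iff_nat i).2 (h.tendsto_derivLimit hx a)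
  rw [← dist_eq_norm]
  exact dist_le_of_le_geometric_two_of_tendsto₀
    (h.dist_iteratedDeriv_add_succ_le hx a c i) hlim

lemma norm_iteratedDeriv_sub_derivLimit_le_of_near (h : IsDyadicApprox f J r K C D w G) (hx : x ∈ J)
    (hy : y ∈ J) {i : ℕ} (hxy : |y - x| ≤ r / 2 ^ i / 2) (a c : ℕ) :
    ‖iteratedDeriv a (G i x) y - derivLimit G a y‖ ≤
      3 * (jumpConst K C D w a c * (r / 2 ^ i) ^ c) := by
  have hjump := h.norm_iteratedDeriv_sub_le (h.approx_half hx hxy) (h.approx_half_self hy i) a c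
  have htail := h.norm_iteratedDeriv_sub_derivLimit_le hy a c i
  have hle : jumpConst K C D w a c * (r / 2 ^ i) ^ c / 2 ^ i ≤
      jumpConst K C D w a c * (r / 2 ^ i) ^ c :=
    div_le_self (mul_nonneg (h.jumpConst_nonneg a c) (pow_nonneg (h.scale_div_pos i).le c))
      (one_le_pow₀ one_le_two)
  linarith [norm_sub_le_norm_sub_add_norm_sub (iteratedDeriv a (G i x) y)
    (iteratedDeriv a (G i y) y) (derivLimit G a y)]

lemma norm_derivLimit_le (h : IsDyadicApprox f J r K C D w G) (hx : x ∈ J) (a : ℕ) :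
    ‖derivLimit G a x‖ ≤ a.factorial * (2 / r) ^ a * K + 2 * jumpConst K C D w a 0 := by
  have hzero : ‖iteratedDeriv a (G 0 x) x‖ ≤ a.factorial * (2 / r) ^ a * K := by
    simpa using (h.approx 0 0 x hx).norm_iteratedDeriv_le (h.scale_div_pos 0) a
  have htail := h.norm_iteratedDeriv_sub_derivLimit_le hx a 0 0
  rw [pow_zero, mul_one, norm_sub_rev] at htail
  linarith [norm_le_norm_add_norm_sub' (derivLimit G a x) (iteratedDeriv a (G 0 x) x)]

lemma derivLimit_zero (h : IsDyadicApprox f J r K C D w G) (hx : x ∈ J) :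
    derivLimit G 0 x = f x := by
  refine tendsto_nhds_unique (h.tendsto_derivLimit hx 0) ?_
  rw [tendsto_iff_norm_sub_tendsto_zero]
  have herror : Tendsto (fun i : ℕ => (C * (1 / 2 : ℝ) ^ i * w 0) ^ 2) atTop (𝓝 0) := by
    have hhalf : Tendsto (fun i : ℕ => (1 / 2 : ℝ) ^ i) atTop (𝓝 0) :=
      tendsto_pow_atTop_nhds_zero_of_lt_one (by norm_num) (by norm_num)
    simpa using ((hhalf.const_mul C).mul_const (w 0)).pow 2
  refine squeeze_zero (fun i => norm_nonneg _) (fun i => ?_) herror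
  simpa using (h.approx i 0 x hx).norm_sub_le x (by simpa using h.scale_div_pos i)

lemma norm_iteratedDeriv_le_of_near (h : IsDyadicApprox f J r K C D w G) (hx : x ∈ J)
    (hy : y ∈ J) {i : ℕ} (hxy : |y - x| ≤ r / 2 ^ i / 2) (a : ℕ) :
    ‖iteratedDeriv a (G i x) y‖ ≤ a.factorial * (2 / r) ^ a * K + 5 * jumpConst K C D w a 0 := by
  have hnear := h.norm_iteratedDeriv_sub_derivLimit_le_of_near hx hy hxy a 0
  rw [pow_zero, mul_one] at hnear
  linarith [h.norm_derivLimit_le hy a,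
    norm_le_norm_add_norm_sub' (iteratedDeriv a (G i x) y) (derivLimit G a y)]

lemma hasDerivAt_derivLimit (h : IsDyadicApprox f J r K C D w G) (hJ : IsOpen J) (hx : x ∈ J)
    (a : ℕ) :
    HasDerivAt (derivLimit G a) (derivLimit G (a + 1) x) x := by
  obtain ⟨δ, hδ, hball⟩ := Metric.isOpen_iff.1 hJ x hx
  have hnonneg := h.jumpConst_nonneg
  refine hasDerivAt_of_forall_exists_approx
    (B := (a + 2).factorial * (2 / r) ^ (a + 2) * K + 5 * jumpConst K C D w (a + 2) 0)
    (R := 48 * jumpConst K C D w a 2 + 12 * jumpConst K C D w (a + 1) 1)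
    (lt_min hδ (half_pos h.scale_pos)) fun y hyx hy => ?_
  obtain ⟨i, hi, hi'⟩ := exists_dyadic_scale (abs_pos.2 (sub_ne_zero.2 hyx))
    (hy.trans_le (min_le_right _ _)).le
  have hseg : ∀ s ∈ uIcc x y, |s - x| ≤ |y - x| := fun s hs => abs_sub_left_of_mem_uIcc hs
  have hsegJ : ∀ s ∈ uIcc x y, s ∈ J := fun s hs =>
    hball ((hseg s hs).trans_lt (hy.trans_le (min_le_left _ _)))
  have hlt : |y - x| < r / 2 ^ i := hi.trans_lt (half_lt_self (h.scale_div_pos i))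
  have hderiv : ∀ b, ∀ s ∈ uIcc x y, HasDerivAt (fun t : ℝ => iteratedDeriv b (G i x) t)
      (iteratedDeriv (b + 1) (G i x) s) s := fun b s hs =>
    (h.approx i 0 x hx).hasDerivAt_iteratedDeriv b ((hseg s hs).trans_lt hlt)
  have hnear := fun s hs => h.norm_iteratedDeriv_sub_derivLimit_le_of_near hx
    (hsegJ s hs) ((hseg s hs).trans hi)
  have hℓ := h.scale_div_pos i
  have hsq : (r / 2 ^ i) ^ 2 ≤ 16 * |y - x| ^ 2 := by
    rw [show (16 : ℝ) * |y - x| ^ 2 = (4 * |y - x|) ^ 2 by ring]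
    gcongr
  have hquad : ∀ s ∈ uIcc x y, ‖iteratedDeriv a (G i x) s - derivLimit G a s‖ ≤
      (48 * jumpConst K C D w a 2 + 12 * jumpConst K C D w (a + 1) 1) * |y - x| ^ 2 :=
    fun s hs => (hnear s hs a 2).trans (by
      nlinarith [hnonneg a 2, mul_nonneg (hnonneg (a + 1) 1) (sq_nonneg |y - x|)])
  refine ⟨_, _, _, hderiv a, hderiv (a + 1), fun s hs =>
    h.norm_iteratedDeriv_le_of_near hx (hsegJ s hs) ((hseg s hs).trans hi) (a + 2),
    hquad y right_mem_uIcc, hquad x left_mem_uIcc, (hnear x left_mem_uIcc (a + 1) 1).trans ?_⟩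
  nlinarith [hnonneg (a + 1) 1, mul_nonneg (hnonneg a 2) (abs_nonneg (y - x))]

lemma contDiffOn_and_norm_iteratedDeriv_le (h : IsDyadicApprox f J r K C D w G) (hJ : IsOpen J) :
    ContDiffOn ℝ (⊤ : ℕ∞) f J ∧ ∀ a, ∀ x ∈ J, ‖iteratedDeriv a f x‖ ≤
      a.factorial * (2 / r) ^ a * K + 2 * jumpConst K C D w a 0 := by
  have hderiv : ∀ a, ∀ x ∈ J, HasDerivAt (derivLimit G a) (derivLimit G (a + 1) x) x :=
    fun a x hx => h.hasDerivAt_derivLimit hJ hx a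
  have heq : EqOn f (derivLimit G 0) J := fun x hx => (h.derivLimit_zero hx).symm
  refine ⟨(contDiffOn_of_hasDerivAt hJ hderiv).congr heq, fun a x hx => ?_⟩
  have hlocal : f =ᶠ[𝓝 x] derivLimit G 0 := eventually_of_mem (hJ.mem_nhds hx) heq
  rw [hlocal.iteratedDeriv_eq a, iteratedDeriv_eq_of_hasDerivAt hJ hderiv a x hx]
  exact h.norm_derivLimit_le hx a

end IsDyadicApprox

end DyadicGluing

section CauchyPompeiu

/-- The Cauchy–Riemann operator `∂φ/∂ζ̄`. Its value is only meaningful where `φ` is real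
differentiable. -/
def dbar (φ : ℂ → ℂ) (ζ : ℂ) : ℂ := (fderiv ℝ φ ζ 1 + Complex.I * fderiv ℝ φ ζ Complex.I) / 2

lemma apply_add_I_mul_apply_I_mul (D : ℂ →L[ℝ] ℂ) (u : ℂ) :
    D u + Complex.I * D (Complex.I * u) =
      (starRingEnd ℂ) u * (D 1 + Complex.I * D Complex.I) := by
  have hu : u = u.re • (1 : ℂ) + u.im • Complex.I := by simp
  have hIu : Complex.I * u = (-u.im) • (1 : ℂ) + u.re • Complex.I := by
    apply Complex.ext <;> simp
  have hconj : (starRingEnd ℂ) u = u.re - u.im * Complex.I := by apply Complex.ext <;> simp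
  have hDu : D u = u.re • D 1 + u.im • D Complex.I := by
    rw [← map_smul, ← map_smul, ← map_add, ← hu]
  rw [hDu, hIu, hconj, map_add, map_smul, map_smul]
  simp only [Complex.real_smul]
  push_cast
  linear_combination ((u.im : ℂ) * D Complex.I) * Complex.I_sq

lemma smul_inv_mul_dbar_polar (ψ : ℂ → ℂ) {r : ℝ} (hr : 0 < r) (θ : ℝ) :
    r • ((r * Complex.exp (θ * Complex.I))⁻¹ * dbar ψ (r * Complex.exp (θ * Complex.I))) =
      2⁻¹ * fderiv ℝ ψ (r * Complex.exp (θ * Complex.I)) (Complex.exp (θ * Complex.I)) +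
      2⁻¹ * Complex.I * fderiv ℝ ψ (r * Complex.exp (θ * Complex.I))
        (Complex.I * Complex.exp (θ * Complex.I)) := by
  have hr' : (r : ℂ) ≠ 0 := by exact_mod_cast hr.ne'
  have hconj := Complex.inv_eq_conj (Complex.norm_exp_ofReal_mul_I θ)
  have key := apply_add_I_mul_apply_I_mul (fderiv ℝ ψ (r * Complex.exp (θ * Complex.I)))
    (Complex.exp (θ * Complex.I))
  rw [← hconj] at key
  rw [Complex.real_smul, mul_inv, dbar, ← mul_assoc, ← mul_assoc, mul_inv_cancel₀ hr', one_mul]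
  linear_combination (-2⁻¹ : ℂ) * key

lemma hasDerivAt_comp_mul_exp {ψ : ℂ → ℂ} (hψ : Differentiable ℝ ψ) (r θ : ℝ) :
    HasDerivAt (fun θ : ℝ => ψ (r * Complex.exp (θ * Complex.I)))
      (r * fderiv ℝ ψ (r * Complex.exp (θ * Complex.I))
        (Complex.I * Complex.exp (θ * Complex.I))) θ := by
  have hexp : HasDerivAt (fun θ : ℝ => Complex.exp (θ * Complex.I))
      (Complex.exp (θ * Complex.I) * Complex.I) θ := by
    have : HasDerivAt (fun θ : ℝ => (θ : ℂ) * Complex.I) (1 * Complex.I) θ :=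
      (Complex.ofRealCLM.hasDerivAt (x := θ)).mul_const Complex.I
    simpa using this.cexp
  have hcomp := (hψ (r * Complex.exp (θ * Complex.I))).hasFDerivAt.comp_hasDerivAt θ
    (hexp.const_mul (r : ℂ))
  have hlin (D : ℂ →L[ℝ] ℂ) (w : ℂ) : D (r * w) = r * D w := by
    rw [← Complex.real_smul, map_smul, Complex.real_smul]
  rwa [mul_comm (Complex.exp _) Complex.I, hlin] at hcomp

lemma integral_fderiv_angular_eq_zero {ψ : ℂ → ℂ} (hψ : ContDiff ℝ 1 ψ) {r : ℝ} (hr : 0 < r) :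
    ∫ θ in Ioo (-Real.pi) Real.pi, fderiv ℝ ψ (r * Complex.exp (θ * Complex.I))
      (Complex.I * Complex.exp (θ * Complex.I)) = 0 := by
  have hr' : (r : ℂ) ≠ 0 := by exact_mod_cast hr.ne'
  have := hψ.continuous_fderiv one_ne_zero
  have hcont : Continuous fun θ : ℝ => (r : ℂ) * fderiv ℝ ψ (r * Complex.exp (θ * Complex.I))
      (Complex.I * Complex.exp (θ * Complex.I)) := by fun_prop
  have hFTC := intervalIntegral.integral_eq_sub_of_hasDerivAt (a := -Real.pi) (b := Real.pi)
    (fun θ _ => hasDerivAt_comp_mul_exp (hψ.differentiable one_ne_zero) r θ)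
    (hcont.intervalIntegrable _ _)
  have hperiod : Complex.exp ((Real.pi : ℝ) * Complex.I) =
      Complex.exp ((-Real.pi : ℝ) * Complex.I) := by
    rw [Complex.exp_mul_I, Complex.exp_mul_I]
    simp
  rw [intervalIntegral.integral_of_le (by linarith [Real.pi_pos]), integral_Ioc_eq_integral_Ioo,
    integral_const_mul, hperiod, sub_self] at hFTC
  exact (mul_eq_zero.1 hFTC).resolve_left hr'

lemma integral_fderiv_radial {ψ : ℂ → ℂ} (hψ : ContDiff ℝ 1 ψ) (hs : HasCompactSupport ψ) {u : ℂ}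
    (hu : ‖u‖ = 1) : ∫ r in Ioi (0 : ℝ), fderiv ℝ ψ (r * u) u = -ψ 0 := by
  have hderiv : ∀ r : ℝ, HasDerivAt (fun r : ℝ => ψ (r * u)) (fderiv ℝ ψ (r * u) u) r := by
    intro r
    have hline : HasDerivAt (fun r : ℝ => (r : ℂ) * u) (1 * u) r :=
      (Complex.ofRealCLM.hasDerivAt (x := r)).mul_const u
    rw [one_mul] at hline
    exact ((hψ.differentiable one_ne_zero) (r * u)).hasFDerivAt.comp_hasDerivAt r hline
  have hiso : Isometry fun r : ℝ => (r : ℂ) * u := by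
    refine Isometry.of_dist_eq fun a b => ?_
    rw [dist_eq_norm, ← sub_mul, norm_mul, hu, mul_one, ← Complex.ofReal_sub, Complex.norm_real,
      Real.dist_eq, Real.norm_eq_abs]
  have hsupp : HasCompactSupport fun r : ℝ => ψ (r * u) :=
    hs.comp_isClosedEmbedding hiso.isClosedEmbedding
  have hline : ContDiff ℝ 1 fun r : ℝ => (r : ℂ) * u :=
    Complex.ofRealCLM.contDiff.mul contDiff_const
  simpa only [(hderiv _).deriv, Complex.ofReal_zero, zero_mul]
    using hsupp.integral_Ioi_deriv_eq (f := fun r : ℝ => ψ (r * u)) (hψ.comp hline) 0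

lemma integrableOn_polar_of_hasCompactSupport {D : ℂ → ℂ →L[ℝ] ℂ} (hD : Continuous D)
    (hs : HasCompactSupport D) {u : ℝ → ℂ} (hu : Continuous u) :
    IntegrableOn (fun p : ℝ × ℝ => D (p.1 * Complex.exp (p.2 * Complex.I)) (u p.2))
      (Ioi 0 ×ˢ Ioo (-Real.pi) Real.pi) := by
  obtain ⟨R, hR⟩ := hs.isCompact.isBounded.subset_ball (0 : ℂ)
  have hcont : Continuous
      fun p : ℝ × ℝ => D (p.1 * Complex.exp (p.2 * Complex.I)) (u p.2) := by fun_prop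
  have hcompact := hcont.continuousOn.integrableOn_compact (μ := volume)
    ((isCompact_Icc (a := 0) (b := R)).prod (isCompact_Icc (a := -Real.pi) (b := Real.pi)))
  refine hcompact.of_forall_sdiff_eq_zero (measurableSet_Ioi.prod measurableSet_Ioo) ?_
  rintro ⟨r, θ⟩ ⟨⟨hr, hθ⟩, hout⟩
  have hRr : R < r := by
    by_contra! hle
    exact hout ⟨⟨le_of_lt hr, hle⟩, Ioo_subset_Icc_self hθ⟩
  have hzero : D (r * Complex.exp (θ * Complex.I)) = 0 := by
    refine image_eq_zero_of_notMem_tsupport fun hmem => hRr.not_gt ?_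
    simpa [Complex.norm_exp_ofReal_mul_I, abs_of_pos hr.out] using hR hmem
  simp [hzero]

/-- In polar coordinates `ζ⁻¹ ∂̄ψ` splits into a radial derivative, whose integral is `-2π ψ 0`,
and an angular derivative, whose integral vanishes by periodicity. -/
lemma integral_inv_mul_dbar {ψ : ℂ → ℂ} (hψ : ContDiff ℝ 1 ψ) (hs : HasCompactSupport ψ) :
    ∫ ζ : ℂ, ζ⁻¹ * dbar ψ ζ = -(Real.pi : ℂ) * ψ 0 := by
  have hD : Continuous (fderiv ℝ ψ) := hψ.continuous_fderiv one_ne_zero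
  have hrad := integrableOn_polar_of_hasCompactSupport hD (hs.fderiv ℝ)
    (u := fun θ => Complex.exp (θ * Complex.I)) (by fun_prop)
  have hang := integrableOn_polar_of_hasCompactSupport hD (hs.fderiv ℝ)
    (u := fun θ => Complex.I * Complex.exp (θ * Complex.I)) (by fun_prop)
  rw [← Complex.integral_comp_polarCoord_symm, polarCoord_target,
    setIntegral_congr_fun (measurableSet_Ioi.prod measurableSet_Ioo) (g := fun p : ℝ × ℝ =>
      2⁻¹ * fderiv ℝ ψ (p.1 * Complex.exp (p.2 * Complex.I)) (Complex.exp (p.2 * Complex.I)) +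
      2⁻¹ * Complex.I * fderiv ℝ ψ (p.1 * Complex.exp (p.2 * Complex.I))
        (Complex.I * Complex.exp (p.2 * Complex.I))),
    integral_add (hrad.const_mul _) (hang.const_mul _), integral_const_mul, integral_const_mul]
  · rw [Measure.volume_eq_prod] at hrad hang ⊢
    have hangular : ∫ p in Ioi (0 : ℝ) ×ˢ Ioo (-Real.pi) Real.pi,
        fderiv ℝ ψ (p.1 * Complex.exp (p.2 * Complex.I))
          (Complex.I * Complex.exp (p.2 * Complex.I)) ∂(volume.prod volume) = 0 := by
      rw [setIntegral_prod _ hang]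
      exact setIntegral_eq_zero_of_forall_eq_zero fun r hr =>
        integral_fderiv_angular_eq_zero hψ hr
    have hradial : ∫ p in Ioi (0 : ℝ) ×ˢ Ioo (-Real.pi) Real.pi,
        fderiv ℝ ψ (p.1 * Complex.exp (p.2 * Complex.I)) (Complex.exp (p.2 * Complex.I))
          ∂(volume.prod volume) = -(2 * Real.pi) * ψ 0 := by
      refine (setIntegral_prod_swap _ _ _).symm.trans ((setIntegral_prod _ hrad.swap).trans ?_)
      simp only [Function.comp_apply, Prod.swap_prod_mk,
        integral_fderiv_radial hψ hs (Complex.norm_exp_ofReal_mul_I _),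
        setIntegral_const, Real.volume_real_Ioo_of_le (neg_le_self Real.pi_pos.le),
        Complex.real_smul]
      push_cast
      ring
    rw [hangular, hradial]
    ring
  · rintro ⟨r, θ⟩ ⟨hr, -⟩
    have hpolar : Complex.polarCoord.symm (r, θ) = r * Complex.exp (θ * Complex.I) := by
      rw [Complex.polarCoord_symm_apply, Complex.exp_mul_I]
      push_cast
      rfl
    simp only [hpolar]
    exact smul_inv_mul_dbar_polar ψ hr θ

/-- The Cauchy transform of `v`, which inverts `dbar` on compactly supported functions. -/
def cauchyTransform (v : ℂ → ℂ) (z : ℂ) : ℂ := -(Real.pi : ℂ)⁻¹ * ∫ ζ : ℂ, (ζ - z)⁻¹ * v ζ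

theorem cauchyTransform_dbar {φ : ℂ → ℂ} (hφ : ContDiff ℝ 1 φ) (hs : HasCompactSupport φ)
    (z : ℂ) : cauchyTransform (dbar φ) z = φ z := by
  have hπ : (Real.pi : ℂ) ≠ 0 := by exact_mod_cast Real.pi_ne_zero
  have h : ∫ ζ : ℂ, ζ⁻¹ * dbar φ (ζ + z) = -(Real.pi : ℂ) * φ z := by
    simpa [Function.comp_def, dbar, fderiv_comp_add_right] using
      integral_inv_mul_dbar (hφ.comp (contDiff_id.add contDiff_const))
        (hs.comp_homeomorph (Homeomorph.addRight z))
  rw [cauchyTransform, ← integral_add_right_eq_self _ z]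
  simp only [add_sub_cancel_right, h]
  field_simp

end CauchyPompeiu

section SingularKernels

lemma locallyIntegrable_norm_inv_rpow {α : ℝ} (hα : α < 2) :
    LocallyIntegrable fun ζ : ℂ => ‖ζ‖⁻¹ ^ α := by
  refine locallyIntegrable_of_norm_le_rpow (C := 1) (α := α) ?_ ?_ (ae_of_all _ fun ζ => ?_) ?_
  · simp [Complex.finrank_real_complex]
  · simpa [Complex.finrank_real_complex] using hα
  · rw [one_mul, Real.norm_of_nonneg (by positivity), Real.rpow_neg (norm_nonneg _),
      Real.inv_rpow (norm_nonneg _)]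
  · exact Measurable.aestronglyMeasurable (by fun_prop)

lemma exists_forall_setIntegral_norm_sub_inv_rpow_le {α : ℝ} (hα₀ : 0 ≤ α) (hα : α < 2)
    {A : Set ℂ} (hA : volume A ≠ ⊤) :
    ∃ κ : ℝ, ∀ c : ℂ, IntegrableOn (fun ζ => ‖ζ - c‖⁻¹ ^ α) A ∧
      ∫ ζ in A, ‖ζ - c‖⁻¹ ^ α ≤ κ := by
  set near : ℂ → ℝ := (Metric.ball 0 1).indicator fun ζ => ‖ζ‖⁻¹ ^ α with hnear
  have hnear_int : Integrable near := by
    rw [hnear, integrable_indicator_iff measurableSet_ball]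
    exact ((locallyIntegrable_norm_inv_rpow hα).integrableOn_isCompact
      (isCompact_closedBall 0 1)).mono_set Metric.ball_subset_closedBall
  have hnear_nonneg : ∀ ζ, 0 ≤ near ζ := indicator_nonneg fun ζ _ => by positivity
  have hle : ∀ ζ : ℂ, ‖ζ‖⁻¹ ^ α ≤ 1 + near ζ := by
    intro ζ
    by_cases h : ζ ∈ Metric.ball 0 1
    · rw [hnear, indicator_of_mem h]
      linarith
    · rw [mem_ball_zero_iff, not_lt] at h
      exact (Real.rpow_le_one (by positivity) (inv_le_one_of_one_le₀ h) hα₀).trans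
        (le_add_of_nonneg_right (hnear_nonneg ζ))
  have hone : IntegrableOn (fun _ : ℂ => (1 : ℝ)) A := integrableOn_const hA
  refine ⟨(∫ _ in A, 1) + ∫ ζ, near ζ, fun c => ?_⟩
  have hshift : Integrable fun ζ => near (ζ - c) := hnear_int.comp_sub_right c
  have hint : IntegrableOn (fun ζ => ‖ζ - c‖⁻¹ ^ α) A := by
    refine Integrable.mono' (hone.add hshift.integrableOn)
      (Measurable.aestronglyMeasurable (by fun_prop)) (ae_of_all _ fun ζ => ?_)
    rw [Real.norm_of_nonneg (by positivity)]
    exact hle (ζ - c)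
  refine ⟨hint, ?_⟩
  calc ∫ ζ in A, ‖ζ - c‖⁻¹ ^ α ≤ ∫ ζ in A, (1 + near (ζ - c)) :=
        integral_mono hint (hone.add hshift.integrableOn) fun ζ => hle (ζ - c)
    _ = (∫ _ in A, 1) + ∫ ζ in A, near (ζ - c) := integral_add hone hshift.integrableOn
    _ ≤ (∫ _ in A, 1) + ∫ ζ, near ζ := by
        grw [setIntegral_le_integral hshift (ae_of_all _ fun ζ => hnear_nonneg (ζ - c)),
          integral_sub_right_eq_self near c]

lemma rpow_mul_le_rpow_add_rpow {p x y : ℝ} (hp : 0 ≤ p) (hx : 0 ≤ x) (hy : 0 ≤ y) :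
    x ^ p * y ≤ x ^ (p + 1) + y ^ (p + 1) := by
  rw [Real.rpow_add_one' hx (by positivity), Real.rpow_add_one' hy (by positivity)]
  have hxp := Real.rpow_nonneg hx p
  have hyp := Real.rpow_nonneg hy p
  rcases le_total x y with h | h
  · nlinarith [mul_le_mul_of_nonneg_right (Real.rpow_le_rpow hx h hp) hy, mul_nonneg hxp hx]
  · nlinarith [mul_le_mul_of_nonneg_left h hxp, mul_nonneg hyp hy]

lemma multiset_sum_rpow_mul_le {p y : ℝ} (hp₀ : 0 < p) (hp₁ : p ≤ 1) (hy : 0 ≤ y)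
    {m : Multiset ℝ} (hm : ∀ x ∈ m, 0 ≤ x) :
    m.sum ^ p * y ≤ (m.map fun x => x ^ (p + 1) + y ^ (p + 1)).sum := by
  have hsub : m.sum ^ p ≤ (m.map (· ^ p)).sum :=
    Multiset.le_sum_of_subadditive_on_pred (· ^ p) (0 ≤ ·) (Real.zero_rpow hp₀.ne').le le_rfl
      (fun a b ha hb => Real.rpow_add_le_add_rpow ha hb hp₀.le hp₁) (fun _ _ => add_nonneg) m hm
  calc m.sum ^ p * y ≤ (m.map (· ^ p)).sum * y := by gcongr
    _ = (m.map fun x => x ^ p * y).sum := Multiset.sum_map_mul_right.symm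
    _ ≤ _ := Multiset.sum_map_le_sum_map _ _ fun x hx =>
        rpow_mul_le_rpow_add_rpow hp₀.le (hm x hx) hy

lemma exists_forall_setIntegral_le_card_mul {p : ℝ} (hp₀ : 0 < p) (hp₁ : p < 1) {A : Set ℂ}
    (hA : volume A ≠ ⊤) :
    ∃ κ : ℝ, 0 ≤ κ ∧ ∀ (z : ℂ) (m : Multiset ℂ), ∃ g : ℂ → ℝ,
      IntegrableOn g A ∧ ∫ ζ in A, g ζ ≤ m.card * κ ∧
      ∀ ζ, (m.map fun a => ‖ζ - a‖⁻¹).sum ^ p * ‖ζ - z‖⁻¹ ≤ g ζ := by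
  obtain ⟨κ, hκ⟩ := exists_forall_setIntegral_norm_sub_inv_rpow_le (α := p + 1) (by linarith)
    (by linarith) hA
  have hκ₀ : 0 ≤ κ := (setIntegral_nonneg_of_ae (ae_of_all _ fun ζ => by positivity)).trans (hκ 0).2
  refine ⟨2 * κ, by positivity, fun z m => ?_⟩
  set g : Multiset ℂ → ℂ → ℝ := fun m ζ =>
    (m.map fun a => ‖ζ - a‖⁻¹ ^ (p + 1) + ‖ζ - z‖⁻¹ ^ (p + 1)).sum with hg
  have hg_int : IntegrableOn (g m) A ∧ ∫ ζ in A, g m ζ ≤ m.card * (2 * κ) := by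
    induction m using Multiset.induction with
    | empty => simp [hg]
    | cons a m ih =>
      have hpair := (hκ a).1.add (hκ z).1
      have hcons : g (a ::ₘ m) =
          (fun ζ => ‖ζ - a‖⁻¹ ^ (p + 1)) + (fun ζ => ‖ζ - z‖⁻¹ ^ (p + 1)) + g m := by
        ext ζ
        simp only [hg, Multiset.map_cons, Multiset.sum_cons, Pi.add_apply]
      rw [hcons, integral_add' hpair ih.1, integral_add' (hκ a).1 (hκ z).1, Multiset.card_cons]
      refine ⟨hpair.add ih.1, ?_⟩
      push_cast
      linarith [ih.2, (hκ a).2, (hκ z).2]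
  refine ⟨g m, hg_int.1, hg_int.2, fun ζ => ?_⟩
  simpa only [Multiset.map_map, Function.comp_def] using
    multiset_sum_rpow_mul_le hp₀ hp₁.le (inv_nonneg.2 (norm_nonneg (ζ - z)))
      (m := m.map fun a => ‖ζ - a‖⁻¹) (by simp)

end SingularKernels

section DbarCorrection

lemma integrable_sub_inv_mul {v : ℂ → ℂ} (hv : Continuous v) (hs : HasCompactSupport v) (z : ℂ) :
    Integrable fun ζ : ℂ => (ζ - z)⁻¹ * v ζ := by
  have hinv : LocallyIntegrable fun ζ : ℂ => ζ⁻¹ :=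
    (locallyIntegrable_norm_inv_rpow one_lt_two).mono
      (Measurable.aestronglyMeasurable (by fun_prop))
      (ae_of_all _ fun ζ => by simp)
  have h := hinv.integrable_smul_right_of_hasCompactSupport
    (hv.comp (continuous_add_const z)) (hs.comp_homeomorph (Homeomorph.addRight z))
  simpa using h.comp_sub_right z

lemma norm_cauchyTransform_le_of_integrable {v : ℂ → ℂ} {z : ℂ} {g : ℂ → ℝ} (hg : Integrable g)
    (hvg : ∀ᵐ ζ, ‖ζ - z‖⁻¹ * ‖v ζ‖ ≤ g ζ) : ‖cauchyTransform v z‖ ≤ ∫ ζ, g ζ := by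
  have hπ : ‖-(Real.pi : ℂ)⁻¹‖ ≤ 1 := by
    rw [norm_neg, norm_inv, Complex.norm_real, Real.norm_of_nonneg Real.pi_pos.le]
    exact inv_le_one_of_one_le₀ (by linarith [Real.pi_gt_three])
  rw [cauchyTransform, norm_mul]
  refine (mul_le_of_le_one_left (norm_nonneg _) hπ).trans
    (norm_integral_le_of_norm_le hg (hvg.mono fun ζ hζ => ?_))
  rwa [norm_mul, norm_inv]

lemma norm_cauchyTransform_le_of_eqOn_zero {v : ℂ → ℂ} (hv : Integrable v) {z : ℂ} {r : ℝ}
    (hr : 0 < r) (hvz : EqOn v 0 (Metric.ball z r)) :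
    ‖cauchyTransform v z‖ ≤ r⁻¹ * ∫ ζ, ‖v ζ‖ := by
  rw [← integral_const_mul]
  refine norm_cauchyTransform_le_of_integrable (hv.norm.const_mul _) (ae_of_all _ fun ζ => ?_)
  by_cases hζ : ζ ∈ Metric.ball z r
  · simp [hvz hζ]
  · rw [mem_ball_iff_norm, not_lt] at hζ
    gcongr

lemma differentiableAt_cauchyTransform {v : ℂ → ℂ} (hv : Integrable v) {z : ℂ} {r : ℝ}
    (hr : 0 < r) (hvz : EqOn v 0 (Metric.ball z r)) :
    DifferentiableAt ℂ (cauchyTransform v) z := by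
  have hfar : ∀ ζ, ∀ x ∈ Metric.ball z (r / 2), v ζ ≠ 0 → r / 2 ≤ ‖ζ - x‖ := by
    intro ζ x hx hζ
    have hζz : r ≤ dist ζ z := not_lt.1 fun h => hζ (hvz h)
    have := dist_triangle ζ x z
    rw [← dist_eq_norm]
    linarith [Metric.mem_ball.1 hx]
  have hmeas : ∀ x, AEStronglyMeasurable (fun ζ => (ζ - x)⁻¹ * v ζ) := fun x =>
    (Measurable.aestronglyMeasurable (by fun_prop)).mul hv.aestronglyMeasurable
  have hbound : ∀ n : ℕ, ∀ ζ, ∀ x ∈ Metric.ball z (r / 2),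
      ‖((ζ - x) ^ n)⁻¹ * v ζ‖ ≤ ((r / 2) ^ n)⁻¹ * ‖v ζ‖ := by
    intro n ζ x hx
    by_cases hζ : v ζ = 0
    · simp [hζ]
    · rw [norm_mul, norm_inv, norm_pow]
      have := hfar ζ x hx hζ
      gcongr
  have hzmem : z ∈ Metric.ball z (r / 2) := Metric.mem_ball_self (by positivity)
  have hderiv := hasDerivAt_integral_of_dominated_loc_of_deriv_le
    (F := fun x ζ => (ζ - x)⁻¹ * v ζ) (F' := fun x ζ => ((ζ - x) ^ 2)⁻¹ * v ζ)
    (Metric.isOpen_ball.mem_nhds hzmem) (Eventually.of_forall hmeas)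
    ((hv.norm.const_mul _).mono' (hmeas z) (ae_of_all _ fun ζ => by
      simpa using hbound 1 ζ z hzmem))
    ((Measurable.aestronglyMeasurable (by fun_prop)).mul hv.aestronglyMeasurable)
    (ae_of_all _ (hbound 2)) (hv.norm.const_mul _) (ae_of_all _ fun ζ x hx => ?_)
  · exact hderiv.2.differentiableAt.const_mul _
  · by_cases hζ : v ζ = 0
    · simpa [hζ] using hasDerivAt_const x (0 : ℂ)
    · have hne : ζ - x ≠ 0 := norm_pos_iff.1 (by linarith [hfar ζ x hx hζ])
      refine ((((hasDerivAt_id x).const_sub ζ).fun_inv hne).mul_const (v ζ)).congr_deriv ?_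
      simp [div_eq_mul_inv]

lemma continuous_dbar {φ : ℂ → ℂ} (hφ : ContDiff ℝ 1 φ) : Continuous (dbar φ) := by
  have := hφ.continuous_fderiv one_ne_zero
  unfold dbar
  fun_prop

lemma dbar_mul {φ ψ : ℂ → ℂ} {ζ : ℂ} (hφ : DifferentiableAt ℝ φ ζ) (hψ : DifferentiableAt ℝ ψ ζ) :
    dbar (fun z => φ z * ψ z) ζ = φ ζ * dbar ψ ζ + ψ ζ * dbar φ ζ := by
  rw [dbar, fderiv_fun_mul hφ hψ, dbar, dbar]
  simp only [add_apply, smul_apply, smul_eq_mul]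
  ring

lemma support_dbar_subset (φ : ℂ → ℂ) : Function.support (dbar φ) ⊆ tsupport φ := by
  intro ζ hζ
  by_contra h
  have hzero : fderiv ℝ φ ζ = 0 :=
    Function.notMem_support.1 fun h' => h (support_fderiv_subset ℝ h')
  simp [dbar, hzero] at hζ

lemma exists_contDiff_cutoff : ∃ χ : ℂ → ℂ, ContDiff ℝ 1 χ ∧ (∀ ζ, ‖χ ζ‖ ≤ 1) ∧
    EqOn χ 1 (Metric.ball 0 (1 / 2)) ∧ EqOn (dbar χ) 0 (Metric.ball 0 (1 / 2)) ∧
    tsupport χ ⊆ Metric.closedBall 0 1 := by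
  let χ : ContDiffBump (0 : ℂ) := ⟨1 / 2, 1, by norm_num, by norm_num⟩
  have hone : EqOn (fun ζ => (χ ζ : ℂ)) 1 (Metric.ball 0 (1 / 2)) := fun ζ hζ => by
    simp [χ.one_of_mem_closedBall (Metric.ball_subset_closedBall hζ)]
  refine ⟨fun ζ => (χ ζ : ℂ), Complex.ofRealCLM.contDiff.comp χ.contDiff, fun ζ => ?_,
    hone, fun ζ hζ => ?_, ?_⟩
  · rw [Complex.norm_real, Real.norm_of_nonneg χ.nonneg]
    exact χ.le_one
  · have hconst : (fun ζ => (χ ζ : ℂ)) =ᶠ[nhds ζ] fun _ => 1 :=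
      hone.eventuallyEq_of_mem (Metric.isOpen_ball.mem_nhds hζ)
    simp [dbar, hconst.fderiv_eq]
  · exact (tsupport_comp_subset Complex.ofReal_zero _).trans χ.tsupport_eq.le

lemma integral_norm_mul_le {u w : ℂ → ℂ} {A : Set ℂ} {B : ℝ} (hw : Integrable w)
    (hwA : Function.support w ⊆ A) (hu : ∀ ζ ∈ A, ‖u ζ‖ ≤ B) :
    ∫ ζ, ‖u ζ * w ζ‖ ≤ B * ∫ ζ, ‖w ζ‖ := by
  rw [← integral_const_mul]
  refine integral_mono_of_nonneg (ae_of_all _ fun ζ => norm_nonneg _) (hw.norm.const_mul _)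
    (ae_of_all _ fun ζ => ?_)
  by_cases hζ : w ζ = 0
  · simp [hζ]
  · simp only [norm_mul]
    gcongr
    exact hu ζ (hwA hζ)

lemma cauchyTransform_mul_dbar_add {χ u : ℂ → ℂ} (hχ : ContDiff ℝ 1 χ) (hs : HasCompactSupport χ)
    (hu : ContDiff ℝ 1 u) (z : ℂ) :
    cauchyTransform (fun ζ => χ ζ * dbar u ζ) z + cauchyTransform (fun ζ => u ζ * dbar χ ζ) z =
      χ z * u z := by
  have hs' : HasCompactSupport (dbar χ) := hs.mono' (support_dbar_subset χ)
  have hint : Integrable fun ζ => (ζ - z)⁻¹ * (χ ζ * dbar u ζ) :=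
    integrable_sub_inv_mul (hχ.continuous.mul (continuous_dbar hu)) hs.mul_right z
  have hint' : Integrable fun ζ => (ζ - z)⁻¹ * (u ζ * dbar χ ζ) :=
    integrable_sub_inv_mul (hu.continuous.mul (continuous_dbar hχ)) hs'.mul_left z
  rw [← cauchyTransform_dbar (hχ.mul hu) hs.mul_right, cauchyTransform, cauchyTransform,
    ← mul_add, ← integral_add hint hint']
  simp only [cauchyTransform, ← mul_add,
    dbar_mul (hχ.differentiable one_ne_zero _) (hu.differentiable one_ne_zero _)]

/-- With a cutoff `χ`, the function `u = χ u` is near `0` the sum of the Cauchy transforms of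
`u ∂̄χ`, which is holomorphic there, and of `χ ∂̄u`, which is the error. -/
lemma exists_holomorphic_norm_sub_le : ∃ C : ℝ, 0 ≤ C ∧ ∀ (u : ℂ → ℂ) (B : ℝ), ContDiff ℝ 1 u →
    (∀ ζ ∈ Metric.closedBall 0 1, ‖u ζ‖ ≤ B) → ∃ F : ℂ → ℂ,
      DifferentiableOn ℂ F (Metric.ball 0 (1 / 4)) ∧
      (∀ z ∈ Metric.ball 0 (1 / 4), ‖F z‖ ≤ C * B) ∧
      ∀ z ∈ Metric.ball 0 (1 / 4), ∀ g : ℂ → ℝ, IntegrableOn g (Metric.closedBall 0 1) →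
        (∀ᵐ ζ, ζ ∈ Metric.closedBall 0 1 → ‖ζ - z‖⁻¹ * ‖dbar u ζ‖ ≤ g ζ) →
        ‖F z - u z‖ ≤ ∫ ζ in Metric.closedBall 0 1, g ζ := by
  obtain ⟨χ, hχ, hχ_le, hχ_one, hdχ_zero, hχ_supp⟩ := exists_contDiff_cutoff
  have hχc : HasCompactSupport χ := (isCompact_closedBall 0 1).of_isClosed_subset
    (isClosed_tsupport χ) hχ_supp
  have hdχ : Continuous (dbar χ) := continuous_dbar hχ
  have hdχc : HasCompactSupport (dbar χ) := hχc.mono' (support_dbar_subset χ)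
  refine ⟨4 * ∫ ζ, ‖dbar χ ζ‖, by positivity, fun u B hu hB => ?_⟩
  have hv : Continuous fun ζ => u ζ * dbar χ ζ := hu.continuous.mul hdχ
  have hv_int := hv.integrable_of_hasCompactSupport (μ := volume) hdχc.mul_left
  have hv_zero : ∀ z ∈ Metric.ball (0 : ℂ) (1 / 4),
      EqOn (fun ζ => u ζ * dbar χ ζ) 0 (Metric.ball z (1 / 4)) := fun z hz ζ hζ => by
    have hmem : ζ ∈ Metric.ball (0 : ℂ) (1 / 2) := by
      rw [Metric.mem_ball] at hz hζ ⊢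
      linarith [dist_triangle ζ z 0]
    simp [hdχ_zero hmem]
  have hv_le := integral_norm_mul_le (hdχ.integrable_of_hasCompactSupport hdχc)
    ((support_dbar_subset χ).trans hχ_supp) hB
  refine ⟨cauchyTransform fun ζ => u ζ * dbar χ ζ, fun z hz =>
    (differentiableAt_cauchyTransform hv_int (by norm_num)
      (hv_zero z hz)).differentiableWithinAt, fun z hz => ?_, fun z hz g hg hug => ?_⟩
  · refine (norm_cauchyTransform_le_of_eqOn_zero hv_int (by norm_num) (hv_zero z hz)).trans ?_
    rw [one_div, inv_inv]
    linarith
  · have hsum := cauchyTransform_mul_dbar_add hχ hχc hu z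
    rw [hχ_one (Metric.ball_subset_ball (by norm_num) hz), Pi.one_apply, one_mul] at hsum
    rw [← hsum, sub_add_cancel_right, norm_neg, ← integral_indicator measurableSet_closedBall]
    refine norm_cauchyTransform_le_of_integrable
      ((integrable_indicator_iff measurableSet_closedBall).2 hg) (hug.mono fun ζ hζ => ?_)
    by_cases hmem : ζ ∈ Metric.closedBall (0 : ℂ) 1
    · rw [indicator_of_mem hmem, norm_mul]
      exact le_trans (by gcongr; exact mul_le_of_le_one_left (norm_nonneg _) (hχ_le ζ)) (hζ hmem)
    · rw [indicator_of_notMem hmem, image_eq_zero_of_notMem_tsupport fun h => hmem (hχ_supp h)]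
      simp

end DbarCorrection

section WirtingerDerivatives

open Complex

/-- `φ` is real differentiable at `ζ` with Wirtinger derivatives `∂φ = a` and `∂̄φ = b`. -/
def HasWirtingerDerivAt (φ : ℂ → ℂ) (a b ζ : ℂ) : Prop :=
  HasFDerivAt (𝕜 := ℝ) φ (a • ContinuousLinearMap.id ℝ ℂ + b • (conjCLE : ℂ →L[ℝ] ℂ)) ζ

namespace HasWirtingerDerivAt

variable {φ ψ : ℂ → ℂ} {a b c d ζ : ℂ}

lemma dbar_eq (h : HasWirtingerDerivAt φ a b ζ) : dbar φ ζ = b := by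
  rw [dbar, HasFDerivAt.fderiv h]
  simp only [add_apply, smul_apply, ContinuousLinearMap.id_apply,
    ContinuousLinearEquiv.coe_coe, conjCLE_apply, smul_eq_mul, map_one, conj_I]
  linear_combination (a - b) / 2 * I_sq

lemma of_hasDerivAt (h : HasDerivAt φ a ζ) : HasWirtingerDerivAt φ a 0 ζ := by
  refine (h.hasFDerivAt.restrictScalars ℝ).congr_fderiv ?_
  ext v
  simp [mul_comm]

lemma mul (hφ : HasWirtingerDerivAt φ a b ζ) (hψ : HasWirtingerDerivAt ψ c d ζ) :
    HasWirtingerDerivAt (fun z => φ z * ψ z) (φ ζ * c + ψ ζ * a) (φ ζ * d + ψ ζ * b) ζ := by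
  refine (HasFDerivAt.fun_mul hφ hψ).congr_fderiv (ContinuousLinearMap.ext fun v => ?_)
  simp only [add_apply, smul_apply, ContinuousLinearMap.id_apply,
    ContinuousLinearEquiv.coe_coe, conjCLE_apply, smul_eq_mul]
  ring

lemma conj (h : HasWirtingerDerivAt φ a b ζ) :
    HasWirtingerDerivAt (fun z => starRingEnd ℂ (φ z)) (starRingEnd ℂ b) (starRingEnd ℂ a) ζ := by
  refine ((conjCLE : ℂ →L[ℝ] ℂ).hasFDerivAt.comp ζ h).congr_fderiv
    (ContinuousLinearMap.ext fun v => ?_)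
  simp only [ContinuousLinearMap.comp_apply, add_apply, smul_apply,
    ContinuousLinearMap.id_apply, ContinuousLinearEquiv.coe_coe, conjCLE_apply, smul_eq_mul,
    map_add, map_mul, conj_conj]
  ring

lemma add_const (h : HasWirtingerDerivAt φ a b ζ) (c : ℂ) :
    HasWirtingerDerivAt (fun z => φ z + c) a b ζ :=
  HasFDerivAt.add_const c h

lemma inv (h : HasWirtingerDerivAt φ a b ζ) (hne : φ ζ ≠ 0) :
    HasWirtingerDerivAt (fun z => (φ z)⁻¹) (-(φ ζ ^ 2)⁻¹ * a) (-(φ ζ ^ 2)⁻¹ * b) ζ := by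
  refine (((hasDerivAt_inv hne).hasFDerivAt.restrictScalars ℝ).comp ζ h).congr_fderiv
    (ContinuousLinearMap.ext fun v => ?_)
  simp only [ContinuousLinearMap.comp_apply, ContinuousLinearMap.coe_restrictScalars',
    ContinuousLinearMap.toSpanSingleton_apply, add_apply, smul_apply,
    ContinuousLinearMap.id_apply, ContinuousLinearEquiv.coe_coe, conjCLE_apply, smul_eq_mul]
  ring

end HasWirtingerDerivAt

end WirtingerDerivatives

section RegularisedQuotient

open Complex ComplexConjugate

/-- The regularisation `q p̄ / (|p|² + ρ²)` of the quotient `q / p`. With `p = φ ^ j` and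
`q = φ ^ (j + 1)` it approximates `φ` even where `p` vanishes. -/
def regQuot (ρ : ℝ) (p q : ℂ) : ℂ := q * conj p * (p * conj p + (ρ : ℂ) ^ 2)⁻¹

lemma mul_conj_add_sq_eq (ρ : ℝ) (p : ℂ) :
    p * conj p + (ρ : ℂ) ^ 2 = ((‖p‖ ^ 2 + ρ ^ 2 : ℝ) : ℂ) := by
  rw [mul_conj, normSq_eq_norm_sq]
  push_cast
  ring

lemma mul_conj_add_sq_ne_zero {ρ : ℝ} (hρ : 0 < ρ) (p : ℂ) : p * conj p + (ρ : ℂ) ^ 2 ≠ 0 := by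
  rw [mul_conj_add_sq_eq]
  exact_mod_cast (by positivity : 0 < ‖p‖ ^ 2 + ρ ^ 2).ne'

lemma norm_regQuot (ρ : ℝ) (p q : ℂ) :
    ‖regQuot ρ p q‖ = ‖q‖ * ‖p‖ / (‖p‖ ^ 2 + ρ ^ 2) := by
  rw [regQuot, mul_conj_add_sq_eq, norm_mul, norm_mul, norm_inv, norm_real, RCLike.norm_conj,
    Real.norm_of_nonneg (by positivity), div_eq_mul_inv]

lemma half_add_sq_le (a b : ℝ) : (a + b) ^ 2 / 2 ≤ a ^ 2 + b ^ 2 := by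
  linarith [add_sq_le (a := a) (b := b)]

section Bounds

variable {j : ℕ} {C ρ K : ℝ} {p q : ℂ}

lemma norm_le_of_norm_pow_succ_sub_pow_le (hj : j ≠ 0) (hC : 1 ≤ C) (hρ : 0 < ρ)
    (h : ‖p ^ (j + 1) - q ^ j‖ ≤ C * ρ ^ (j + 1)) :
    ‖q‖ ≤ C * (‖p‖ + ρ) ^ (1 + 1 / (j : ℝ)) := by
  have hb : 0 < ‖p‖ + ρ := by positivity
  have hroot : ((‖p‖ + ρ) ^ (1 + 1 / (j : ℝ))) ^ j = (‖p‖ + ρ) ^ (j + 1) := by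
    have : (j : ℝ) ≠ 0 := by positivity
    rw [← Real.rpow_natCast, ← Real.rpow_mul hb.le, ← Real.rpow_natCast]
    congr 1
    push_cast
    field_simp
  refine le_of_pow_le_pow_left₀ hj (by positivity) ?_
  calc ‖q‖ ^ j ≤ ‖p‖ ^ (j + 1) + ‖p ^ (j + 1) - q ^ j‖ := by
        simpa only [sub_sub_cancel, norm_pow] using norm_sub_le (p ^ (j + 1)) (p ^ (j + 1) - q ^ j)
    _ ≤ C * ‖p‖ ^ (j + 1) + C * ρ ^ (j + 1) := by
        gcongr
        exact le_mul_of_one_le_left (by positivity) hC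
    _ ≤ C * (‖p‖ + ρ) ^ (j + 1) := by
        rw [← mul_add]
        gcongr
        exact pow_add_pow_le (norm_nonneg p) hρ.le (by omega)
    _ ≤ C ^ j * (‖p‖ + ρ) ^ (j + 1) := by
        gcongr
        exact le_self_pow₀ hC hj
    _ = (C * (‖p‖ + ρ) ^ (1 + 1 / (j : ℝ))) ^ j := by rw [mul_pow, hroot]

lemma norm_regQuot_le (hj : j ≠ 0) (hC : 1 ≤ C) (hρ : 0 < ρ) (hρ₁ : ρ ≤ 1) (hp : ‖p‖ ≤ K)
    (h : ‖p ^ (j + 1) - q ^ j‖ ≤ C * ρ ^ (j + 1)) :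
    ‖regQuot ρ p q‖ ≤ 2 * C * (K + 1) := by
  have hK : 0 ≤ K := (norm_nonneg p).trans hp
  have hb : 0 < ‖p‖ + ρ := by positivity
  have hroot : (‖p‖ + ρ) ^ (1 / (j : ℝ)) ≤ K + 1 :=
    calc (‖p‖ + ρ) ^ (1 / (j : ℝ)) ≤ (K + 1) ^ (1 / (j : ℝ)) := by gcongr
      _ ≤ (K + 1) ^ (1 : ℝ) := by
          refine Real.rpow_le_rpow_of_exponent_le (by linarith) ?_
          exact div_le_one_of_le₀ (by exact_mod_cast Nat.one_le_iff_ne_zero.2 hj) (by positivity)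
      _ = K + 1 := Real.rpow_one _
  calc ‖regQuot ρ p q‖ = ‖q‖ * ‖p‖ / (‖p‖ ^ 2 + ρ ^ 2) := norm_regQuot ρ p q
    _ ≤ C * (‖p‖ + ρ) ^ (1 + 1 / (j : ℝ)) * (‖p‖ + ρ) / ((‖p‖ + ρ) ^ 2 / 2) := by
        gcongr
        · exact norm_le_of_norm_pow_succ_sub_pow_le hj hC hρ h
        · linarith
        · exact half_add_sq_le _ _
    _ = 2 * C * (‖p‖ + ρ) ^ (1 / (j : ℝ)) := by
        rw [Real.rpow_add hb, Real.rpow_one]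
        field_simp
    _ ≤ 2 * C * (K + 1) := by gcongr

lemma norm_le_rpow_mul_of_le_mul {p' : ℂ} {b S s : ℝ} (hs₀ : 0 ≤ s) (hs₁ : s < 1) (hK : 1 ≤ K)
    (hp' : ‖p'‖ ≤ K) (hbS : ‖p'‖ ≤ b * S) : ‖p'‖ ≤ (b * S) ^ (1 - s) * K :=
  calc ‖p'‖ = ‖p'‖ ^ (1 - s) * ‖p'‖ ^ s := by
        rw [← Real.rpow_add' (norm_nonneg _) (by norm_num), sub_add_cancel, Real.rpow_one]
    _ ≤ (b * S) ^ (1 - s) * K ^ s := by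
        have : 0 ≤ 1 - s := by linarith
        have : 0 ≤ b * S := (norm_nonneg p').trans hbS
        gcongr
    _ ≤ (b * S) ^ (1 - s) * K := by
        have : 0 ≤ b * S := (norm_nonneg p').trans hbS
        gcongr
        exact Real.rpow_le_self_of_one_le hK hs₁.le

lemma norm_mul_mul_sq_div_le {p' : ℂ} {S : ℝ} (hj : j ≠ 0) (hC : 1 ≤ C) (hρ : 0 < ρ) (hK : 1 ≤ K)
    (hS : 0 ≤ S) (h : ‖p ^ (j + 1) - q ^ j‖ ≤ C * ρ ^ (j + 1)) (hp' : ‖p'‖ ≤ K)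
    (hpS : ‖p'‖ ≤ ‖p‖ * S) :
    ‖q‖ * ‖p'‖ * ρ ^ 2 / (‖p‖ ^ 2 + ρ ^ 2) ^ 2 ≤
      4 * C * K * ρ ^ (1 / (2 * (j : ℝ))) * S ^ (1 - 1 / (2 * (j : ℝ))) := by
  set s := 1 / (2 * (j : ℝ)) with hs
  set b := ‖p‖ + ρ
  have hb₀ : 0 < b := by positivity
  have hs₀ : 0 < s := by positivity
  have hs₁ : s < 1 := by
    have : (1 : ℝ) ≤ j := by exact_mod_cast Nat.one_le_iff_ne_zero.2 hj
    rw [hs, div_lt_one (by positivity)]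
    linarith
  have hq : ‖q‖ ≤ C * b ^ (1 + 2 * s) := by
    have : 1 / (j : ℝ) = 2 * s := by rw [hs]; field_simp
    exact this ▸ norm_le_of_norm_pow_succ_sub_pow_le hj hC hρ h
  have hp'_le : ‖p'‖ ≤ b ^ (1 - s) * S ^ (1 - s) * K := by
    rw [← Real.mul_rpow hb₀.le hS]
    refine norm_le_rpow_mul_of_le_mul hs₀.le hs₁ hK hp' (hpS.trans ?_)
    gcongr
    linarith
  have hden : b ^ 4 / 4 ≤ (‖p‖ ^ 2 + ρ ^ 2) ^ 2 := by
    calc b ^ 4 / 4 = (b ^ 2 / 2) ^ 2 := by ring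
      _ ≤ (‖p‖ ^ 2 + ρ ^ 2) ^ 2 := by
          gcongr
          exact half_add_sq_le _ _
  calc ‖q‖ * ‖p'‖ * ρ ^ 2 / (‖p‖ ^ 2 + ρ ^ 2) ^ 2
      ≤ C * b ^ (1 + 2 * s) * (b ^ (1 - s) * S ^ (1 - s) * K) * ρ ^ 2 / (b ^ 4 / 4) := by gcongr
    _ = 4 * C * K * S ^ (1 - s) * ρ ^ 2 * (b ^ (1 + 2 * s) * b ^ (1 - s) / b ^ 4) := by
        field_simp
    _ = 4 * C * K * S ^ (1 - s) * ρ ^ 2 * b ^ (s - 2) := by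
        rw [← Real.rpow_natCast b 4, ← Real.rpow_add hb₀, ← Real.rpow_sub hb₀]
        congr 2
        push_cast
        ring
    _ ≤ 4 * C * K * S ^ (1 - s) * ρ ^ 2 * ρ ^ (s - 2) := by
        have : b ^ (s - 2) ≤ ρ ^ (s - 2) :=
          Real.rpow_le_rpow_of_nonpos hρ (le_add_of_nonneg_left (norm_nonneg p)) (by linarith)
        gcongr
    _ = 4 * C * K * ρ ^ s * S ^ (1 - s) := by
        rw [Real.rpow_sub hρ, Real.rpow_two]
        field_simp

lemma norm_mul_sq_div_le_of_norm_sub_pow_le {φ : ℂ} {η : ℝ} (hj : j ≠ 0) (hρ : 0 < ρ)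
    (hp : ‖p - φ ^ j‖ ≤ η) :
    ‖φ‖ * ρ ^ 2 / (‖p‖ ^ 2 + ρ ^ 2) ≤ 4 * ρ ^ (1 / (j : ℝ)) + ‖φ‖ * η / ρ := by
  set κ := ρ ^ (1 / (j : ℝ)) with hκ
  have hη : 0 ≤ η := (norm_nonneg _).trans hp
  have hκ₀ : 0 < κ := by positivity
  have hκj : κ ^ j = ρ := by rw [hκ, one_div, Real.rpow_inv_natCast_pow hρ.le hj]
  have hle : ‖φ‖ * ρ ^ 2 / (‖p‖ ^ 2 + ρ ^ 2) ≤ ‖φ‖ := by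
    refine div_le_of_le_mul₀ (by positivity) (norm_nonneg φ) ?_
    gcongr
    linarith [sq_nonneg ‖p‖]
  have hquot : 0 ≤ ‖φ‖ * η / ρ := by positivity
  rcases le_total ‖φ‖ (2 * κ) with hφ | hφ
  · linarith
  rcases le_total ρ η with hρη | hηρ
  · have : ‖φ‖ ≤ ‖φ‖ * η / ρ := by rw [le_div_iff₀ hρ]; gcongr
    linarith
  have hφp : ‖φ‖ ^ j ≤ 2 * ‖p‖ := by
    have hlow : 2 * ρ ≤ ‖φ‖ ^ j :=
      calc 2 * ρ ≤ 2 ^ j * κ ^ j := by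
            rw [hκj]
            gcongr
            exact le_self_pow₀ (by norm_num) hj
        _ = (2 * κ) ^ j := (mul_pow ..).symm
        _ ≤ ‖φ‖ ^ j := by gcongr
    have hupp := norm_sub_norm_le (φ ^ j) p
    rw [norm_pow, norm_sub_rev] at hupp
    linarith
  have hmain : ‖φ‖ * ρ ^ 2 ≤ κ * (2 * ‖p‖) ^ 2 :=
    calc ‖φ‖ * ρ ^ 2 = κ * ‖φ‖ * κ ^ (2 * j - 1) := by
          rw [← hκj, ← pow_mul, mul_comm j 2, ← Nat.sub_one_add_one (by omega : 2 * j ≠ 0),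
            pow_succ, Nat.add_sub_cancel]
          ring
      _ ≤ κ * ‖φ‖ * ‖φ‖ ^ (2 * j - 1) := by
          gcongr
          linarith
      _ = κ * (‖φ‖ ^ j) ^ 2 := by
          rw [← pow_mul, mul_comm j 2, mul_assoc, ← pow_succ', Nat.sub_one_add_one (by omega)]
      _ ≤ κ * (2 * ‖p‖) ^ 2 := by gcongr
  have : ‖φ‖ * ρ ^ 2 / (‖p‖ ^ 2 + ρ ^ 2) ≤ 4 * κ := by
    rw [div_le_iff₀ (by positivity)]
    nlinarith [mul_nonneg hκ₀.le (sq_nonneg ρ)]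
  linarith

lemma norm_regQuot_sub_le {φ : ℂ} {η Φ : ℝ} (hj : j ≠ 0) (hρ : 0 < ρ) (hφ : ‖φ‖ ≤ Φ)
    (hp : ‖p - φ ^ j‖ ≤ η) (hq : ‖q - φ ^ (j + 1)‖ ≤ η) :
    ‖regQuot ρ p q - φ‖ ≤ 4 * ρ ^ (1 / (j : ℝ)) + (1 + 2 * Φ) * η / ρ := by
  have hη : 0 ≤ η := (norm_nonneg _).trans hp
  have hΦ : 0 ≤ Φ := (norm_nonneg φ).trans hφ
  have hden : 0 < ‖p‖ ^ 2 + ρ ^ 2 := by positivity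
  have hsplit : regQuot ρ p q - φ = regQuot ρ p (q - φ ^ (j + 1) - φ * (p - φ ^ j)) -
      φ * (ρ : ℂ) ^ 2 * (p * conj p + (ρ : ℂ) ^ 2)⁻¹ := by
    unfold regQuot
    linear_combination φ * mul_inv_cancel₀ (mul_conj_add_sq_ne_zero hρ p)
  have hnum : ‖q - φ ^ (j + 1) - φ * (p - φ ^ j)‖ ≤ (1 + Φ) * η :=
    calc _ ≤ ‖q - φ ^ (j + 1)‖ + ‖φ‖ * ‖p - φ ^ j‖ := by
          rw [← norm_mul]
          exact norm_sub_le _ _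
      _ ≤ η + Φ * η := by gcongr
      _ = (1 + Φ) * η := by ring
  have hfirst : ‖regQuot ρ p (q - φ ^ (j + 1) - φ * (p - φ ^ j))‖ ≤ (1 + Φ) * η * (1 / ρ) := by
    have : ‖p‖ / (‖p‖ ^ 2 + ρ ^ 2) ≤ 1 / ρ := by
      rw [div_le_div_iff₀ hden hρ]
      nlinarith [sq_nonneg (‖p‖ - ρ)]
    rw [norm_regQuot, mul_div_assoc]
    gcongr
  have hsecond : ‖φ * (ρ : ℂ) ^ 2 * (p * conj p + (ρ : ℂ) ^ 2)⁻¹‖ ≤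
      4 * ρ ^ (1 / (j : ℝ)) + Φ * η / ρ := by
    rw [mul_conj_add_sq_eq, norm_mul, norm_mul, norm_inv, norm_pow, norm_real, norm_real,
      Real.norm_of_nonneg hden.le, Real.norm_of_nonneg hρ.le, ← div_eq_mul_inv]
    refine (norm_mul_sq_div_le_of_norm_sub_pow_le hj hρ hp).trans ?_
    gcongr
  calc _ ≤ (1 + Φ) * η * (1 / ρ) + (4 * ρ ^ (1 / (j : ℝ)) + Φ * η / ρ) := by
        rw [hsplit]
        exact (norm_sub_le _ _).trans (add_le_add hfirst hsecond)
    _ = _ := by ring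

end Bounds

open Polynomial

lemma dbar_regQuot_eval {ρ : ℝ} (hρ : 0 < ρ) (P Q : ℂ[X]) (ζ : ℂ) :
    dbar (fun z => regQuot ρ (P.eval z) (Q.eval z)) ζ =
      Q.eval ζ * conj (P.derivative.eval ζ) * (ρ : ℂ) ^ 2 *
        ((P.eval ζ * conj (P.eval ζ) + (ρ : ℂ) ^ 2) ^ 2)⁻¹ := by
  have hP := HasWirtingerDerivAt.of_hasDerivAt (P.hasDerivAt ζ)
  have hQ := HasWirtingerDerivAt.of_hasDerivAt (Q.hasDerivAt ζ)
  have hne := mul_conj_add_sq_ne_zero hρ (P.eval ζ)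
  have hden := ((hP.mul hP.conj).add_const ((ρ : ℂ) ^ 2)).inv hne
  unfold regQuot
  rw [((hQ.mul hP.conj).mul hden).dbar_eq]
  field_simp
  ring

lemma norm_dbar_regQuot_eval {ρ : ℝ} (hρ : 0 < ρ) (P Q : ℂ[X]) (ζ : ℂ) :
    ‖dbar (fun z => regQuot ρ (P.eval z) (Q.eval z)) ζ‖ =
      ‖Q.eval ζ‖ * ‖P.derivative.eval ζ‖ * ρ ^ 2 / (‖P.eval ζ‖ ^ 2 + ρ ^ 2) ^ 2 := by
  rw [dbar_regQuot_eval hρ, mul_conj_add_sq_eq, norm_mul, norm_mul, norm_mul, norm_inv, norm_pow,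
    norm_pow, RCLike.norm_conj, norm_real, norm_real, Real.norm_of_nonneg hρ.le,
    Real.norm_of_nonneg (by positivity), div_eq_mul_inv]

lemma contDiff_regQuot_eval {ρ : ℝ} (hρ : 0 < ρ) (P Q : ℂ[X]) :
    ContDiff ℝ 1 fun z => regQuot ρ (P.eval z) (Q.eval z) := by
  have heval (R : ℂ[X]) : ContDiff ℝ 1 fun z : ℂ => R.eval z :=
    (R.contDiff_aeval (𝕜 := ℂ) (R := ℂ) 1).restrict_scalars ℝ
  have hconj : ContDiff ℝ 1 fun z : ℂ => conj (P.eval z) :=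
    (conjCLE : ℂ →L[ℝ] ℂ).contDiff.comp (heval P)
  exact ((heval Q).mul hconj).mul
    ((((heval P).mul hconj).add contDiff_const).inv fun z => mul_conj_add_sq_ne_zero hρ _)

lemma norm_eval_derivative_le (P : ℂ[X]) {ζ : ℂ} (h : P = 0 ∨ P.eval ζ ≠ 0) :
    ‖P.derivative.eval ζ‖ ≤ ‖P.eval ζ‖ * (P.roots.map fun a => ‖ζ - a‖⁻¹).sum := by
  rcases h with rfl | h
  · simp
  have hlog := (IsAlgClosed.splits P).eval_derivative_div_eval_of_ne_zero h
  rw [div_eq_iff h] at hlog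
  rw [hlog, norm_mul, mul_comm]
  gcongr
  refine (norm_multiset_sum_le _).trans_eq ?_
  simp only [Multiset.map_map, Function.comp_def, one_div, norm_inv]

lemma ae_eq_zero_or_eval_ne_zero (P : ℂ[X]) : ∀ᵐ ζ : ℂ, P = 0 ∨ P.eval ζ ≠ 0 := by
  by_cases hP : P = 0
  · exact ae_of_all _ fun _ => Or.inl hP
  have hfin : {ζ : ℂ | P.eval ζ = 0}.Finite :=
    P.roots.toFinset.finite_toSet.subset fun ζ hζ => by simpa [hP] using hζ
  filter_upwards [compl_mem_ae_iff.2 (hfin.measure_zero volume)] with ζ hζ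
  exact Or.inr hζ

lemma ae_norm_dbar_regQuot_le {j : ℕ} {K C ρ : ℝ} (hj : j ≠ 0) (hK : 1 ≤ K) (hC : 1 ≤ C)
    (hρ : 0 < ρ) {P Q : ℂ[X]} {s : Set ℂ} (hP' : ∀ ζ ∈ s, ‖P.derivative.eval ζ‖ ≤ K)
    (hPQ : ∀ ζ ∈ s, ‖P.eval ζ ^ (j + 1) - Q.eval ζ ^ j‖ ≤ C * ρ ^ (j + 1)) :
    ∀ᵐ ζ, ζ ∈ s → ‖dbar (fun z => regQuot ρ (P.eval z) (Q.eval z)) ζ‖ ≤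
      4 * C * K * ρ ^ (1 / (2 * (j : ℝ))) *
        (P.roots.map fun a => ‖ζ - a‖⁻¹).sum ^ (1 - 1 / (2 * (j : ℝ))) := by
  filter_upwards [ae_eq_zero_or_eval_ne_zero P] with ζ hζ hmem
  rw [norm_dbar_regQuot_eval hρ]
  refine norm_mul_mul_sq_div_le hj hC hρ hK ?_ (hPQ ζ hmem) (hP' ζ hmem)
    (norm_eval_derivative_le P hζ)
  refine Multiset.sum_nonneg fun x hx => ?_
  obtain ⟨a, -, rfl⟩ := Multiset.mem_map.1 hx
  positivity

lemma exists_holomorphic_norm_sub_regQuot_le {j : ℕ} {K C : ℝ} (hj : j ≠ 0) (hK : 1 ≤ K)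
    (hC : 1 ≤ C) : ∃ C' : ℝ, 0 ≤ C' ∧ ∀ (P Q : ℂ[X]) (ρ : ℝ), 0 < ρ → ρ ≤ 1 →
      (∀ ζ ∈ Metric.closedBall (0 : ℂ) 1, ‖P.eval ζ‖ ≤ K) →
      (∀ ζ ∈ Metric.closedBall (0 : ℂ) 1, ‖P.derivative.eval ζ‖ ≤ K) →
      (∀ ζ ∈ Metric.closedBall (0 : ℂ) 1,
        ‖P.eval ζ ^ (j + 1) - Q.eval ζ ^ j‖ ≤ C * ρ ^ (j + 1)) →
      ∃ F : ℂ → ℂ, DifferentiableOn ℂ F (Metric.ball 0 (1 / 4)) ∧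
        (∀ z ∈ Metric.ball (0 : ℂ) (1 / 4), ‖F z‖ ≤ C') ∧
        ∀ z ∈ Metric.ball (0 : ℂ) (1 / 4), ‖F z - regQuot ρ (P.eval z) (Q.eval z)‖ ≤
          C' * P.natDegree * ρ ^ (1 / (2 * (j : ℝ))) := by
  have hj₁ : (1 : ℝ) ≤ j := by exact_mod_cast Nat.one_le_iff_ne_zero.2 hj
  set s := 1 / (2 * (j : ℝ)) with hs
  have hs₀ : 0 < s := by positivity
  have hs₁ : s < 1 := by
    rw [hs, div_lt_one (by positivity)]
    linarith
  obtain ⟨κ, hκ, hkernel⟩ := exists_forall_setIntegral_le_card_mul (sub_pos.2 hs₁)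
    (sub_lt_self 1 hs₀) (measure_closedBall_lt_top (x := (0 : ℂ)) (r := 1)).ne
  obtain ⟨C₀, hC₀, hdbar⟩ := exists_holomorphic_norm_sub_le
  refine ⟨C₀ * (2 * C * (K + 1)) + 4 * C * K * κ, by positivity, ?_⟩
  intro P Q ρ hρ hρ₁ hP hP' hPQ
  obtain ⟨F, hFd, hFb, hFu⟩ := hdbar _ (2 * C * (K + 1)) (contDiff_regQuot_eval hρ P Q)
    fun ζ hζ => norm_regQuot_le hj hC hρ hρ₁ (hP ζ hζ) (hPQ ζ hζ)
  refine ⟨F, hFd, fun z hz => (hFb z hz).trans (le_add_of_nonneg_right (by positivity)), ?_⟩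
  intro z hz
  obtain ⟨g, hg, hgκ, hgle⟩ := hkernel z P.roots
  have hle := hFu z hz (fun ζ => 4 * C * K * ρ ^ s * g ζ) (hg.const_mul _) ?_
  · rw [integral_const_mul] at hle
    calc _ ≤ 4 * C * K * ρ ^ s * (P.natDegree * κ) := by
          refine hle.trans ?_
          gcongr
          refine hgκ.trans ?_
          gcongr
          exact P.card_roots'
      _ = (4 * C * K * κ) * P.natDegree * ρ ^ s := by ring
      _ ≤ _ := by
          gcongr
          exact le_add_of_nonneg_left (by positivity)
  filter_upwards [ae_norm_dbar_regQuot_le hj hK hC hρ hP' hPQ] with ζ hζ hmem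
  calc _ ≤ ‖ζ - z‖⁻¹ * (4 * C * K * ρ ^ s *
        (P.roots.map fun a => ‖ζ - a‖⁻¹).sum ^ (1 - s)) := by
        gcongr
        exact hζ hmem
    _ = 4 * C * K * ρ ^ s *
        ((P.roots.map fun a => ‖ζ - a‖⁻¹).sum ^ (1 - s) * ‖ζ - z‖⁻¹) := by ring
    _ ≤ 4 * C * K * ρ ^ s * g ζ := by
        gcongr
        exact hgle ζ

end RegularisedQuotient

lemma norm_pow_sub_pow_le {𝕜 : Type*} [NormedField 𝕜] {a b : 𝕜} {R : ℝ} (ha : ‖a‖ ≤ R)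
    (hb : ‖b‖ ≤ R) (n : ℕ) : ‖a ^ n - b ^ n‖ ≤ n * R ^ (n - 1) * ‖a - b‖ := by
  rw [← geom_sum₂_mul a b n, norm_mul]
  gcongr
  calc ‖∑ i ∈ Finset.range n, a ^ i * b ^ (n - 1 - i)‖
      ≤ ∑ _i ∈ Finset.range n, R ^ (n - 1) := by
        refine norm_sum_le_of_le _ fun i hi => ?_
        have hR : 0 ≤ R := (norm_nonneg a).trans ha
        have hexp : i + (n - 1 - i) = n - 1 := by
          have := Finset.mem_range.1 hi
          omega
        rw [norm_mul, norm_pow, norm_pow, ← hexp, pow_add, hexp]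
        gcongr
    _ = n * R ^ (n - 1) := by rw [Finset.sum_const, Finset.card_range, nsmul_eq_mul]

section PolynomialPowerApproximation

open Polynomial Metric

/-- The polynomials `P` and `Q` approximate `φ ^ j` and `φ ^ (j + 1)` on the real interval
`[-2, 2]` up to the error `A * δ`, and all functions involved are bounded by `A`, the polynomials
even on the complex disc of radius `4`. -/
structure IsPowerApprox (φ : ℝ → ℂ) (j : ℕ) (A δ : ℝ) (P Q : ℂ[X]) : Prop where
  norm_le : ∀ y : ℝ, |y| ≤ 2 → ‖φ y‖ ≤ A
  norm_eval_left_le : ∀ z : ℂ, ‖z‖ ≤ 4 → ‖P.eval z‖ ≤ A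
  norm_eval_right_le : ∀ z : ℂ, ‖z‖ ≤ 4 → ‖Q.eval z‖ ≤ A
  norm_sub_left_le : ∀ y : ℝ, |y| ≤ 2 → ‖P.eval (y : ℂ) - φ y ^ j‖ ≤ A * δ
  norm_sub_right_le : ∀ y : ℝ, |y| ≤ 2 → ‖Q.eval (y : ℂ) - φ y ^ (j + 1)‖ ≤ A * δ

/-- A constant `K` with `‖P ^ (j + 1) - Q ^ j‖ ≤ K * δ` on `[-2, 2]` and `‖P ^ (j + 1) - Q ^ j‖ ≤ K`
on the disc of radius `4`, for every pair `P`, `Q` with `IsPowerApprox φ j A δ P Q`. -/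
def powerApproxConst (j : ℕ) (A : ℝ) : ℝ := 2 * (j + 1) * (A ^ (j + 1)) ^ (j + 1) * A

lemma one_le_powerApproxConst (j : ℕ) {A : ℝ} (hA : 1 ≤ A) : 1 ≤ powerApproxConst j A := by
  have hpow : 1 ≤ (A ^ (j + 1)) ^ (j + 1) := one_le_pow₀ (one_le_pow₀ hA)
  have : (1 : ℝ) ≤ 2 * (j + 1) := by
    have : (0 : ℝ) ≤ j := j.cast_nonneg
    linarith
  exact one_le_mul_of_one_le_of_one_le (one_le_mul_of_one_le_of_one_le this hpow) hA

namespace IsPowerApprox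

variable {φ : ℝ → ℂ} {j : ℕ} {A δ : ℝ} {P Q : ℂ[X]}

lemma norm_eval_derivative_le (h : IsPowerApprox φ j A δ P Q) {z : ℂ} (hz : z ∈ closedBall 0 1) :
    ‖P.derivative.eval z‖ ≤ A := by
  have hsphere : ∀ w ∈ sphere z 1, ‖P.eval w‖ ≤ A := fun w hw => h.norm_eval_left_le w <| by
    rw [mem_sphere_iff_norm] at hw
    rw [mem_closedBall_zero_iff] at hz
    linarith [norm_sub_norm_le w z]
  have hcauchy := Complex.norm_deriv_le_of_forall_mem_sphere_norm_le one_pos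
    P.differentiable.diffContOnCl hsphere
  rwa [Polynomial.deriv, div_one] at hcauchy

lemma norm_pow_succ_sub_pow_le_of_norm_le (h : IsPowerApprox φ j A δ P Q) (hA : 1 ≤ A) {z : ℂ}
    (hz : ‖z‖ ≤ 4) : ‖P.eval z ^ (j + 1) - Q.eval z ^ j‖ ≤ powerApproxConst j A := by
  have hpow : A ^ (j + 1) ≤ (A ^ (j + 1)) ^ (j + 1) := le_self_pow₀ (one_le_pow₀ hA) (by omega)
  calc ‖P.eval z ^ (j + 1) - Q.eval z ^ j‖ ≤ ‖P.eval z‖ ^ (j + 1) + ‖Q.eval z‖ ^ j := by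
        rw [← norm_pow, ← norm_pow]
        exact norm_sub_le _ _
    _ ≤ A ^ (j + 1) + A ^ (j + 1) := by
        gcongr
        · exact h.norm_eval_left_le z hz
        · refine (pow_le_pow_left₀ (norm_nonneg _) (h.norm_eval_right_le z hz) j).trans ?_
          exact pow_le_pow_right₀ hA (by omega)
    _ ≤ 2 * 1 * (A ^ (j + 1)) ^ (j + 1) * 1 := by linarith
    _ ≤ powerApproxConst j A := by
        unfold powerApproxConst
        gcongr
        exact le_add_of_nonneg_left j.cast_nonneg

lemma norm_pow_succ_sub_pow_le_of_real (h : IsPowerApprox φ j A δ P Q) (hA : 1 ≤ A) {y : ℝ}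
    (hy : |y| ≤ 2) :
    ‖P.eval (y : ℂ) ^ (j + 1) - Q.eval (y : ℂ) ^ j‖ ≤ powerApproxConst j A * δ := by
  set R := A ^ (j + 1) with hR
  have hR₁ : 1 ≤ R := one_le_pow₀ hA
  have hAR : A ≤ R := le_self_pow₀ hA (by omega)
  have hy4 : ‖(y : ℂ)‖ ≤ 4 := by rw [Complex.norm_real, Real.norm_eq_abs]; linarith
  have hφpow (n : ℕ) (hn : n ≤ j + 1) : ‖φ y ^ n‖ ≤ R := by
    rw [norm_pow]
    exact (pow_le_pow_left₀ (norm_nonneg _) (h.norm_le y hy) n).trans (pow_le_pow_right₀ hA hn)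
  have : 0 ≤ A * δ := (norm_nonneg _).trans (h.norm_sub_left_le y hy)
  have hpow {a b : ℂ} {n : ℕ} (hn : n ≤ j + 1) (ha : ‖a‖ ≤ R) (hb : ‖b‖ ≤ R)
      (hab : ‖a - b‖ ≤ A * δ) : ‖a ^ n - b ^ n‖ ≤ (j + 1) * R ^ (j + 1) * (A * δ) :=
    (norm_pow_sub_pow_le ha hb n).trans <| by
      gcongr
      · exact_mod_cast hn
      · omega
  have hP := hpow le_rfl ((h.norm_eval_left_le _ hy4).trans hAR) (hφpow j (by omega))
    (h.norm_sub_left_le y hy)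
  have hQ := hpow j.le_succ ((h.norm_eval_right_le _ hy4).trans hAR) (hφpow (j + 1) le_rfl)
    (h.norm_sub_right_le y hy)
  have hcomm : (φ y ^ j) ^ (j + 1) = (φ y ^ (j + 1)) ^ j := by ring
  calc _ = ‖(P.eval (y : ℂ) ^ (j + 1) - (φ y ^ j) ^ (j + 1)) -
        (Q.eval (y : ℂ) ^ j - (φ y ^ (j + 1)) ^ j)‖ := by rw [hcomm, sub_sub_sub_cancel_right]
    _ ≤ (j + 1) * R ^ (j + 1) * (A * δ) + (j + 1) * R ^ (j + 1) * (A * δ) :=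
        (norm_sub_le _ _).trans (add_le_add hP hQ)
    _ = powerApproxConst j A * δ := by
        rw [powerApproxConst, ← hR]
        ring

lemma norm_pow_succ_sub_pow_le (h : IsPowerApprox φ j A δ P Q) (hA : 1 ≤ A) {z : ℂ}
    (hz : z ∈ closedBall 0 1) :
    ‖P.eval z ^ (j + 1) - Q.eval z ^ j‖ ≤ powerApproxConst j A * √δ := by
  have hK : 0 ≤ powerApproxConst j A := zero_le_one.trans (one_le_powerApproxConst j hA)
  have htwo := norm_le_sqrt_of_norm_le_on_real (G := fun z => P.eval z ^ (j + 1) - Q.eval z ^ j)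
    (x := 0) two_pos ((P.differentiable.pow (j + 1)).sub (Q.differentiable.pow j)).differentiableOn
    (fun w hw => h.norm_pow_succ_sub_pow_le_of_norm_le hA <| by
      rw [Complex.ofReal_zero, mem_ball_zero_iff] at hw
      linarith)
    (fun y hy => h.norm_pow_succ_sub_pow_le_of_real hA <| by rwa [sub_zero] at hy)
    (z := z) (by simpa using hz)
  rwa [← mul_assoc, Real.sqrt_mul (mul_self_nonneg _), Real.sqrt_mul_self hK] at htwo

end IsPowerApprox

lemma rpow_le_and_div_rpow_le {j δ : ℝ} (hj : 1 ≤ j) (hδ : 0 < δ) (hδ₁ : δ ≤ 1) :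
    (δ ^ (1 / (2 * (j + 1)))) ^ (1 / j) ≤ δ ^ (1 / (4 * j * (j + 1))) ∧
      δ / δ ^ (1 / (2 * (j + 1))) ≤ δ ^ (1 / (4 * j * (j + 1))) := by
  constructor
  · rw [← Real.rpow_mul hδ.le, one_div_mul_one_div]
    apply Real.rpow_le_rpow_of_exponent_ge hδ hδ₁
    gcongr 1 / ?_
    nlinarith
  · nth_rewrite 1 [← Real.rpow_one δ]
    rw [← Real.rpow_sub hδ]
    apply Real.rpow_le_rpow_of_exponent_ge hδ hδ₁
    have h₁ : 1 / (2 * (j + 1)) ≤ 1 / 4 := by gcongr; linarith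
    have h₂ : 1 / (4 * j * (j + 1)) ≤ 1 / 4 := by gcongr; nlinarith
    linarith

lemma exists_isHolomorphicApprox_of_isPowerApprox {j : ℕ} (hj : j ≠ 0) {A : ℝ} (hA : 1 ≤ A) :
    ∃ C : ℝ, 0 ≤ C ∧ ∀ (φ : ℝ → ℂ) (δ : ℝ) (P Q : ℂ[X]), 0 < δ → δ ≤ 1 →
      IsPowerApprox φ j A δ P Q → ∃ F : ℂ → ℂ, IsHolomorphicApprox φ 0 (1 / 4) C
        (C * (1 + P.natDegree) * δ ^ (1 / (4 * (j : ℝ) * (j + 1)))) F := by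
  obtain ⟨C, hC, hF⟩ :=
    exists_holomorphic_norm_sub_regQuot_le hj hA (one_le_powerApproxConst j hA)
  refine ⟨C + 4 + (1 + 2 * A) * A, by positivity, fun φ δ P Q hδ hδ₁ h => ?_⟩
  set ρ := δ ^ (1 / (2 * ((j : ℝ) + 1))) with hρ_def
  set τ := 1 / (4 * (j : ℝ) * (j + 1)) with hτ
  have hρ : 0 < ρ := by positivity
  have hρpow : ρ ^ (j + 1) = √δ := by
    rw [Real.sqrt_eq_rpow, hρ_def, ← Real.rpow_natCast, ← Real.rpow_mul hδ.le]
    congr 1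
    push_cast
    field_simp
  have hρτ : ρ ^ (1 / (2 * (j : ℝ))) = δ ^ τ := by
    rw [hρ_def, ← Real.rpow_mul hδ.le, one_div_mul_one_div, hτ]
    ring_nf
  obtain ⟨hρj, hδρ⟩ := rpow_le_and_div_rpow_le (j := j)
    (by exact_mod_cast Nat.one_le_iff_ne_zero.2 hj) hδ hδ₁
  have hdisc : closedBall (0 : ℂ) 1 ⊆ {z | ‖z‖ ≤ 4} := fun z hz =>
    (mem_closedBall_zero_iff.1 hz).trans (by norm_num)
  obtain ⟨F, hFd, hFb, hFu⟩ := hF P Q ρ hρ (Real.rpow_le_one hδ.le hδ₁ (by positivity))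
    (fun z hz => h.norm_eval_left_le z (hdisc hz)) (fun z hz => h.norm_eval_derivative_le hz)
    (fun z hz => hρpow ▸ h.norm_pow_succ_sub_pow_le hA hz)
  refine ⟨F, by simpa using hFd, fun z hz => ?_, fun y hy => ?_⟩
  · refine (hFb z (by simpa using hz)).trans ?_
    have : 0 ≤ (1 + 2 * A) * A := by positivity
    linarith
  have hy' : |y| ≤ 2 := by rw [sub_zero] at hy; linarith
  have hregQuot := norm_regQuot_sub_le hj hρ (h.norm_le y hy') (h.norm_sub_left_le y hy')
    (h.norm_sub_right_le y hy')
  calc ‖F y - φ y‖ ≤ C * P.natDegree * δ ^ τ +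
        (4 * ρ ^ (1 / (j : ℝ)) + (1 + 2 * A) * (A * δ) / ρ) :=
        norm_sub_le_norm_sub_add_norm_sub _ _ _ |>.trans <|
          add_le_add (hρτ ▸ hFu y (by simpa using hy)) hregQuot
    _ = C * P.natDegree * δ ^ τ + 4 * ρ ^ (1 / (j : ℝ)) + (1 + 2 * A) * A * (δ / ρ) := by ring
    _ ≤ C * P.natDegree * δ ^ τ + 4 * δ ^ τ + (1 + 2 * A) * A * δ ^ τ := by gcongr
    _ ≤ (C + 4 + (1 + 2 * A) * A) * (1 + P.natDegree) * δ ^ τ := by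
        rw [← add_mul, ← add_mul]
        gcongr
        have : 0 ≤ (4 + (1 + 2 * A) * A) * (P.natDegree : ℝ) := by positivity
        linarith

lemma IsHolomorphicApprox.rescale {f : ℝ → ℂ} {x l r K e : ℝ} {F : ℂ → ℂ} (hl : 0 < l)
    (h : IsHolomorphicApprox (fun y => f (x + l * y)) 0 r K e F) :
    IsHolomorphicApprox f x (l * r) K e fun z => F ((z - x) / l) := by
  have hmaps : MapsTo (fun z : ℂ => (z - x) / l) (ball (x : ℂ) (l * r)) (ball ((0 : ℝ) : ℂ) r) := by
    intro z hz
    rw [mem_ball_iff_norm] at hz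
    rwa [Complex.ofReal_zero, mem_ball_zero_iff, norm_div, Complex.norm_real,
      Real.norm_of_nonneg hl.le, div_lt_iff₀' hl]
  refine ⟨h.differentiableOn.comp (by fun_prop) hmaps, fun z hz => h.norm_le _ (hmaps hz), ?_⟩
  intro y hy
  have hy' : |(y - x) / l - 0| < r := by
    rwa [sub_zero, abs_div, abs_of_pos hl, div_lt_iff₀' hl]
  have hxy : x + l * ((y - x) / l) = y := by rw [mul_div_cancel₀ _ hl.ne', add_sub_cancel]
  simpa only [hxy, Complex.ofReal_div, Complex.ofReal_sub] using h.norm_sub_le _ hy'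

end PolynomialPowerApproximation

section AssociatedFunctions

variable {m m₁ m₂ : ℕ → ℝ} {t B : ℝ}

lemma RootTendsToInfty.tendsto_mul_pow (hr : RootTendsToInfty m) (hm : ∀ k, 0 < m k)
    (ht : 0 < t) : Tendsto (fun k => m k * t ^ k) atTop atTop := by
  refine tendsto_atTop_mono' _ ?_ (tendsto_pow_atTop_atTop_of_one_lt (one_lt_two (α := ℝ)))
  filter_upwards [hr.eventually_ge_atTop (2 / t), eventually_ne_atTop 0] with k hk hk0
  have hpow : (2 / t) ^ k ≤ m k := by
    calc (2 / t) ^ k ≤ (m k ^ (1 / (k : ℝ))) ^ k := by gcongr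
      _ = m k := by rw [one_div, Real.rpow_inv_natCast_pow (hm k).le hk0]
  calc (2 : ℝ) ^ k = (2 / t) ^ k * t ^ k := by rw [← mul_pow, div_mul_cancel₀ _ ht.ne']
    _ ≤ m k * t ^ k := by gcongr

lemma RootTendsToInfty.exists_forall_mul_pow_le (hr : RootTendsToInfty m) (hm : ∀ k, 0 < m k)
    (ht : 0 < t) : ∃ n, ∀ k, m n * t ^ n ≤ m k * t ^ k := by
  have h := hr.tendsto_mul_pow hm ht
  rw [← Nat.cofinite_eq_atTop] at h
  exact h.exists_forall_le

lemma RootTendsToInfty.exists_pow_le_mul (hr : RootTendsToInfty m) (hm : ∀ k, 0 < m k) {r : ℝ}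
    (hr₀ : 0 < r) : ∃ C, 0 < C ∧ ∀ k, r ^ k ≤ C * m k := by
  obtain ⟨n, hn⟩ := hr.exists_forall_mul_pow_le hm (inv_pos.2 hr₀)
  have hpos : 0 < m n * r⁻¹ ^ n := mul_pos (hm n) (by positivity)
  refine ⟨(m n * r⁻¹ ^ n)⁻¹, inv_pos.2 hpos, fun k => ?_⟩
  rw [le_inv_mul_iff₀ hpos]
  calc m n * r⁻¹ ^ n * r ^ k
      ≤ m k * r⁻¹ ^ k * r ^ k := mul_le_mul_of_nonneg_right (hn k) (by positivity)
    _ = m k := by rw [inv_pow, inv_mul_cancel_right₀ (pow_pos hr₀ k).ne']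

lemma RootTendsToInfty.mul_pow_gammaBar_le (hr : RootTendsToInfty m) (hm : ∀ k, 0 < m k)
    (ht : 0 < t) (a : ℕ) : m (GammaBar m t) * t ^ GammaBar m t ≤ m a * t ^ a := by
  have hbdd : BddBelow (range fun k => m k * t ^ k) :=
    ⟨0, by rintro _ ⟨k, rfl⟩; exact (mul_pos (hm k) (pow_pos ht k)).le⟩
  have hattained : {k | hFun m t = m k * t ^ k}.Nonempty := by
    obtain ⟨n, hn⟩ := hr.exists_forall_mul_pow_le hm ht
    exact ⟨n, (ciInf_le hbdd n).antisymm (le_ciInf hn)⟩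
  have hmin : hFun m t = m (GammaBar m t) * t ^ GammaBar m t := Nat.sInf_mem hattained
  exact hmin ▸ ciInf_le hbdd a

lemma antitoneOn_mul_pow_of_ratio_le (hm : ∀ k, 0 < m k) (ht : 0 < t) {n : ℕ}
    (h : ∀ i < n, m (i + 1) / m i ≤ 1 / t) : AntitoneOn (fun i => m i * t ^ i) (Iic n) := by
  refine antitoneOn_of_succ_le ordConnected_Iic fun i _ _ hi => ?_
  have hle := h i hi
  rw [div_le_div_iff₀ (hm i) ht, one_mul] at hle
  calc m (i + 1) * t ^ (i + 1) = m (i + 1) * t * t ^ i := by ring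
    _ ≤ m i * t ^ i := by gcongr

lemma mul_pow_le_one_of_le_gammaLow (hm : ∀ k, 0 < m k) (hm₀ : m 0 = 1) (ht : 0 < t) {k : ℕ}
    (hk : k ≤ GammaLow m t) : m k * t ^ k ≤ 1 := by
  have hratio (i : ℕ) (hi : i < GammaLow m t) : m (i + 1) / m i ≤ 1 / t :=
    (not_le.1 (Nat.notMem_of_lt_sInf hi : ¬1 / t ≤ m (i + 1) / m i)).le
  simpa [hm₀] using antitoneOn_mul_pow_of_ratio_le hm ht hratio (Nat.zero_le _) hk k.zero_le

-- Induction on `k`, passing from `k` to `p = Γ̄ (B t) < k` where `1 / t` is the largest ratio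
-- `m₁ (i + 1) / m₁ i` with `i < k`.
lemma le_pow_mul_of_gammaBar_le_gammaLow (h₁ : ∀ k, 0 < m₁ k) (h₂ : ∀ k, 0 < m₂ k)
    (h₁₀ : m₁ 0 = 1) (h₂₀ : m₂ 0 = 1) (hr : RootTendsToInfty m₂) (hB : 0 < B)
    (hG : ∀ t, 0 < t → GammaBar m₂ (B * t) ≤ GammaLow m₁ t) (k : ℕ) : m₁ k ≤ B ^ k * m₂ k := by
  induction k using Nat.strong_induction_on with
  | _ k ih =>
    rcases Nat.eq_zero_or_pos k with rfl | hk
    · simp [h₁₀, h₂₀]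
    obtain ⟨i₀, hi₀, hmax⟩ := Finset.exists_max_image (Finset.range k)
      (fun i => m₁ (i + 1) / m₁ i) ⟨0, Finset.mem_range.2 hk⟩
    obtain ⟨t, ht, hti₀⟩ : ∃ t, 0 < t ∧ m₁ (i₀ + 1) / m₁ i₀ = 1 / t :=
      ⟨1 / (m₁ (i₀ + 1) / m₁ i₀), by have := h₁ (i₀ + 1); have := h₁ i₀; positivity, by simp⟩
    set p := GammaBar m₂ (B * t)
    have hpk : p < k :=
      ((hG t ht).trans (Nat.sInf_le hti₀.ge)).trans_lt (Finset.mem_range.1 hi₀)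
    have hanti : AntitoneOn (fun i => m₁ i * t ^ i) (Iic k) :=
      antitoneOn_mul_pow_of_ratio_le h₁ ht fun i hi => hti₀ ▸ hmax i (Finset.mem_range.2 hi)
    refine le_of_mul_le_mul_right ?_ (pow_pos ht k)
    calc m₁ k * t ^ k ≤ m₁ p * t ^ p := hanti hpk.le self_mem_Iic hpk.le
      _ ≤ B ^ p * m₂ p * t ^ p := by gcongr; exact ih p hpk
      _ = m₂ p * (B * t) ^ p := by ring
      _ ≤ m₂ k * (B * t) ^ k := hr.mul_pow_gammaBar_le h₂ (mul_pos hB ht) k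
      _ = B ^ k * m₂ k * t ^ k := by ring

lemma exists_mul_pow_le_one_and_mul_pow_le (h₁ : ∀ k, 0 < m₁ k) (h₂ : ∀ k, 0 < m₂ k)
    (h₁₀ : m₁ 0 = 1) (h₂₀ : m₂ 0 = 1) (hr : RootTendsToInfty m₂) (hB : 0 < B)
    (hG : ∀ t, 0 < t → GammaBar m₂ (B * t) ≤ GammaLow m₁ t) (ht : 0 < t) :
    ∃ p, (∀ k ≤ p, m₁ k * t ^ k ≤ 1) ∧ ∀ a, m₁ p * t ^ p ≤ m₂ a * (B * t) ^ a := by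
  set p := GammaBar m₂ (B * t)
  refine ⟨p, fun k hk => mul_pow_le_one_of_le_gammaLow h₁ h₁₀ ht (hk.trans (hG t ht)),
    fun a => ?_⟩
  calc m₁ p * t ^ p ≤ B ^ p * m₂ p * t ^ p := by
        gcongr; exact le_pow_mul_of_gammaBar_le_gammaLow h₁ h₂ h₁₀ h₂₀ hr hB hG p
    _ = m₂ p * (B * t) ^ p := by ring
    _ ≤ m₂ a * (B * t) ^ a := hr.mul_pow_gammaBar_le h₂ (mul_pos hB ht) a

end AssociatedFunctions

section ModerateGrowth

variable {M N : ℕ → ℝ}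

lemma mseq_pos (hM : ∀ k, 0 < M k) (k : ℕ) : 0 < mseq M k :=
  div_pos (hM k) (by positivity)

lemma mseq_zero (M : ℕ → ℝ) : mseq M 0 = M 0 := by simp [mseq]

lemma factorial_mul_mseq (M : ℕ → ℝ) (k : ℕ) : (k.factorial : ℝ) * mseq M k = M k :=
  mul_div_cancel₀ _ (by positivity)

lemma MgFinite.exists_le_pow_mul (h : MgFinite M N) (hM : ∀ k, 0 < M k) (hN : ∀ k, 0 < N k)
    (hM₀ : M 0 = 1) (hN₀ : N 0 = 1) :
    ∃ C, 1 ≤ C ∧ ∀ j k, M (j + k) ≤ C ^ (j + k) * (N j * N k) := by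
  obtain ⟨b, hb⟩ := h
  refine ⟨max 1 b, le_max_left _ _, fun j k => ?_⟩
  rcases Nat.eq_zero_or_pos (j + k) with h0 | hpos
  · obtain ⟨rfl, rfl⟩ : j = 0 ∧ k = 0 := by omega
    simp [hM₀, hN₀]
  have hratio : 0 ≤ M (j + k) / (N j * N k) := (div_pos (hM _) (mul_pos (hN _) (hN _))).le
  have hroot : (M (j + k) / (N j * N k)) ^ (1 / ((j + k : ℕ) : ℝ)) ≤ b :=
    hb ⟨j, k, hpos, by push_cast; rfl⟩
  rw [← div_le_iff₀ (mul_pos (hN _) (hN _))]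
  calc M (j + k) / (N j * N k)
      = ((M (j + k) / (N j * N k)) ^ (1 / ((j + k : ℕ) : ℝ))) ^ (j + k) := by
        rw [one_div, Real.rpow_inv_natCast_pow hratio hpos.ne']
    _ ≤ max 1 b ^ (j + k) := by gcongr; exact hroot.trans (le_max_right _ _)

lemma MgFinite.exists_mseq_two_mul_le (h : MgFinite M N) (hM : ∀ k, 0 < M k)
    (hN : ∀ k, 0 < N k) (hM₀ : M 0 = 1) (hN₀ : N 0 = 1) :
    ∃ C, 1 ≤ C ∧ ∀ a, mseq M (2 * a) ≤ C ^ a * mseq N a ^ 2 := by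
  obtain ⟨C, hC, hMN⟩ := h.exists_le_pow_mul hM hN hM₀ hN₀
  refine ⟨C ^ 2, one_le_pow₀ hC, fun a => ?_⟩
  have hfact : (a.factorial : ℝ) ^ 2 ≤ (2 * a).factorial := by
    rw [sq, two_mul]
    exact_mod_cast Nat.le_of_dvd (Nat.factorial_pos _)
      (Nat.factorial_mul_factorial_dvd_factorial_add a a)
  rw [mseq, mseq, div_pow, ← mul_div_assoc, ← pow_mul, two_mul, sq (N a)]
  have hNa := hN a
  gcongr
  · exact hMN a a
  · rwa [← two_mul]

lemma exists_mseq_two_pow_mul_le {M : ℕ → ℕ → ℝ} {n : ℕ} (hpos : ∀ i ≤ n, ∀ a, 0 < M i a)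
    (hzero : ∀ i ≤ n, M i 0 = 1) (hmg : ∀ i < n, MgFinite (M i) (M (i + 1))) :
    ∃ H, 1 ≤ H ∧ ∀ a, mseq (M 0) (2 ^ n * a) ≤ H ^ a * mseq (M n) a ^ 2 ^ n := by
  induction n with
  | zero => exact ⟨1, le_rfl, fun a => by simp⟩
  | succ n ih =>
    obtain ⟨H, hH, hHle⟩ := ih (fun i hi => hpos i (by omega)) (fun i hi => hzero i (by omega))
      fun i hi => hmg i (by omega)
    obtain ⟨C, hC, hCle⟩ := (hmg n n.lt_succ_self).exists_mseq_two_mul_le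
      (hpos n (by omega)) (hpos (n + 1) le_rfl) (hzero n (by omega)) (hzero (n + 1) le_rfl)
    refine ⟨H ^ 2 * C ^ 2 ^ n, one_le_mul_of_one_le_of_one_le (one_le_pow₀ hH) (one_le_pow₀ hC),
      fun a => ?_⟩
    have hmn := (mseq_pos (hpos n (by omega)) (2 * a)).le
    calc mseq (M 0) (2 ^ (n + 1) * a) = mseq (M 0) (2 ^ n * (2 * a)) := by
          rw [pow_succ, mul_assoc]
      _ ≤ H ^ (2 * a) * mseq (M n) (2 * a) ^ 2 ^ n := hHle (2 * a)
      _ ≤ H ^ (2 * a) * (C ^ a * mseq (M (n + 1)) a ^ 2) ^ 2 ^ n := by gcongr; exact hCle a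
      _ = (H ^ 2 * C ^ 2 ^ n) ^ a * mseq (M (n + 1)) a ^ 2 ^ (n + 1) := by ring

lemma exists_mseq_mul_pow_le_pow {M : ℕ → ℕ → ℝ} {k : ℕ} {B : ℝ} (hk : 2 ≤ k)
    (hpos : ∀ i, 1 ≤ i → i ≤ k → ∀ a, 0 < M i a) (hzero : ∀ i, 1 ≤ i → i ≤ k → M i 0 = 1)
    (hroot : RootTendsToInfty (mseq (M 2))) (hB : 0 < B)
    (hG : ∀ t, 0 < t → GammaBar (mseq (M 2)) (B * t) ≤ GammaLow (mseq (M 1)) t)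
    (hmg : ∀ i, 2 ≤ i → i ≤ k - 1 → MgFinite (M i) (M (i + 1))) :
    ∃ D, 0 < D ∧ ∀ t, 0 < t → ∃ p, (∀ i ≤ p, mseq (M 1) i * t ^ i ≤ 1) ∧
      ∀ a, mseq (M 1) p * t ^ p ≤ (mseq (M k) a * (D * t) ^ a) ^ 2 ^ (k - 2) := by
  obtain ⟨n, rfl⟩ := Nat.exists_eq_add_of_le' hk
  obtain ⟨H, hH, hHle⟩ := exists_mseq_two_pow_mul_le (M := fun i => M (i + 2)) (n := n)
    (fun i hi => hpos _ (by omega) (by omega)) (fun i hi => hzero _ (by omega) (by omega))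
    fun i hi => hmg _ (by omega) (by omega)
  refine ⟨H * B, by positivity, fun t ht => ?_⟩
  obtain ⟨p, hle_one, hle⟩ := exists_mul_pow_le_one_and_mul_pow_le
    (mseq_pos (hpos 1 le_rfl (by omega))) (mseq_pos (hpos 2 (by omega) (by omega)))
    ((mseq_zero _).trans (hzero 1 le_rfl (by omega)))
    ((mseq_zero _).trans (hzero 2 (by omega) (by omega))) hroot hB hG ht
  refine ⟨p, hle_one, fun a => ?_⟩
  have hmk := mseq_pos (hpos (n + 2) (by omega) le_rfl) a
  have hHa : H ^ a ≤ H ^ (2 ^ n * a) :=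
    pow_le_pow_right₀ hH (Nat.le_mul_of_pos_left _ (by positivity))
  calc mseq (M 1) p * t ^ p ≤ mseq (M 2) (2 ^ n * a) * (B * t) ^ (2 ^ n * a) := hle _
    _ ≤ H ^ (2 ^ n * a) * mseq (M (n + 2)) a ^ 2 ^ n * (B * t) ^ (2 ^ n * a) := by
      gcongr
      exact (hHle a).trans (by gcongr)
    _ = (mseq (M (n + 2)) a * (H * B * t) ^ a) ^ 2 ^ (n + 2 - 2) := by
      rw [Nat.add_sub_cancel, mul_comm (2 ^ n) a, pow_mul, pow_mul]
      ring

end ModerateGrowth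

section TaylorApproximation

open Polynomial Metric

lemma norm_sub_taylorWithinEval_le {E : Type*} [NormedAddCommGroup E] [NormedSpace ℝ E]
    {F : ℝ → E} {S : Set ℝ} {n : ℕ} {C x y : ℝ} (hS : Convex ℝ S) (hS' : UniqueDiffOn ℝ S)
    (hF : ContDiffOn ℝ (n + 1) F S) (hC : ∀ s ∈ S, ‖iteratedDerivWithin (n + 1) F S s‖ ≤ C)
    (hx : x ∈ S) (hy : y ∈ S) :
    ‖F y - taylorWithinEval F n S x y‖ ≤ C / n.factorial * |y - x| ^ (n + 1) := by
  have hsub : uIcc x y ⊆ S := segment_eq_uIcc x y ▸ hS.segment_subset hx hy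
  have hderiv : ∀ t ∈ uIcc x y, HasDerivWithinAt (fun t => taylorWithinEval F n S t y)
      (((n.factorial : ℝ)⁻¹ * (y - t) ^ n) • iteratedDerivWithin (n + 1) F S t) (uIcc x y) t :=
    fun t ht => (hasDerivWithinAt_taylorWithinEval hS' self_mem_nhdsWithin (hsub ht) le_rfl
      hF.of_succ (hF.differentiableOn_iteratedDerivWithin (mod_cast n.lt_succ_self) hS' t
        (hsub ht))).mono hsub
  have hbound : ∀ t ∈ uIcc x y,
      ‖((n.factorial : ℝ)⁻¹ * (y - t) ^ n) • iteratedDerivWithin (n + 1) F S t‖ ≤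
        (n.factorial : ℝ)⁻¹ * |y - x| ^ n * C := fun t ht => by
    rw [norm_smul, norm_mul, norm_pow, Real.norm_eq_abs (y - t), norm_inv, Real.norm_natCast]
    exact mul_le_mul (mul_le_mul_of_nonneg_left
      (pow_le_pow_left₀ (abs_nonneg _) (abs_sub_right_of_mem_uIcc ht) n) (by positivity))
      (hC t (hsub ht)) (norm_nonneg _) (by positivity)
  have hmvt := (convex_uIcc x y).norm_image_sub_le_of_norm_hasDerivWithin_le hderiv hbound
    left_mem_uIcc right_mem_uIcc
  rw [taylorWithinEval_self, Real.norm_eq_abs] at hmvt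
  exact hmvt.trans_eq (by ring)

/-- The function `F` is smooth on `S` and its derivatives obey the Denjoy–Carleman bound
`‖F⁽ᵃ⁾‖ ≤ A * σ ^ a * M a` there. -/
structure HasDerivBoundOn (M : ℕ → ℝ) (A σ : ℝ) (F : ℝ → ℂ) (S : Set ℝ) : Prop where
  contDiffOn : ContDiffOn ℝ (⊤ : ℕ∞) F S
  norm_iteratedDeriv_le : ∀ x ∈ S, ∀ a, ‖iteratedDeriv a F x‖ ≤ A * σ ^ a * M a

/-- The Taylor polynomial at `0`, truncated to degrees `< p`, of the rescaled function
`y ↦ F (x + l * y)`. -/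
def scaledTaylor (F : ℝ → ℂ) (x l : ℝ) (p : ℕ) : ℂ[X] :=
  ∑ k ∈ Finset.range p, monomial k (l ^ k / k.factorial * iteratedDeriv k F x)

lemma natDegree_scaledTaylor_le (F : ℝ → ℂ) (x l : ℝ) (p : ℕ) :
    (scaledTaylor F x l p).natDegree ≤ p :=
  natDegree_sum_le_of_forall_le _ _ fun _ hk =>
    (natDegree_monomial_le _).trans (Finset.mem_range.1 hk).le

lemma scaledTaylor_eval_ofReal {F : ℝ → ℂ} {S : Set ℝ} {x : ℝ} (hS : IsOpen S) (hx : x ∈ S)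
    (l y : ℝ) (n : ℕ) :
    (scaledTaylor F x l (n + 1)).eval (y : ℂ) = taylorWithinEval F n S x (x + l * y) := by
  rw [scaledTaylor, eval_finsetSum, taylor_within_apply]
  refine Finset.sum_congr rfl fun k _ => ?_
  rw [eval_monomial, iteratedDerivWithin_of_isOpen hS hx, Complex.real_smul]
  push_cast
  ring

namespace HasDerivBoundOn

variable {M : ℕ → ℝ} {A A' σ σ' : ℝ} {F : ℝ → ℂ} {S T : Set ℝ} {x l r : ℝ} {p : ℕ}

lemma anti (h : HasDerivBoundOn M A σ F S) (hTS : T ⊆ S) : HasDerivBoundOn M A σ F T :=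
  ⟨h.contDiffOn.mono hTS, fun x hx => h.norm_iteratedDeriv_le x (hTS hx)⟩

lemma mono (h : HasDerivBoundOn M A σ F S) (hM : ∀ a, 0 < M a) (hA' : 0 ≤ A') (hσ : 0 ≤ σ)
    (hAA' : A ≤ A') (hσσ' : σ ≤ σ') : HasDerivBoundOn M A' σ' F S := by
  refine ⟨h.contDiffOn, fun x hx a => (h.norm_iteratedDeriv_le x hx a).trans ?_⟩
  have := hM a
  gcongr

lemma norm_scaledTaylor_eval_le (h : HasDerivBoundOn M A σ F S) (hx : x ∈ S) (hA : 0 ≤ A)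
    (hl : 0 ≤ l) (hp : ∀ k ≤ p, mseq M k * (8 * σ * l) ^ k ≤ 1) {z : ℂ} (hz : ‖z‖ ≤ 4) :
    ‖(scaledTaylor F x l p).eval z‖ ≤ 2 * A := by
  have hterm : ∀ k ∈ Finset.range p,
      ‖l ^ k / k.factorial * iteratedDeriv k F x * z ^ k‖ ≤ A * (1 / 2) ^ k := fun k hk => by
    have hderiv := h.norm_iteratedDeriv_le x hx k
    have hbound₀ := (norm_nonneg _).trans hderiv
    rw [norm_mul, norm_mul, norm_div, norm_pow, norm_pow, Complex.norm_natCast,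
      Complex.norm_real, Real.norm_of_nonneg hl]
    calc l ^ k / k.factorial * ‖iteratedDeriv k F x‖ * ‖z‖ ^ k
        ≤ l ^ k / k.factorial * (A * σ ^ k * M k) * 4 ^ k := by
          gcongr
      _ = A * (mseq M k * (8 * σ * l) ^ k) * (1 / 2) ^ k := by
          rw [show 8 * σ * l = 2 * 4 * σ * l by ring, mseq]
          simp only [mul_pow, one_div, inv_pow]
          field_simp
      _ ≤ A * 1 * (1 / 2) ^ k := by gcongr; exact hp k (Finset.mem_range.1 hk).le
      _ = A * (1 / 2) ^ k := by rw [mul_one]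
  rw [scaledTaylor, eval_finsetSum]
  simp only [eval_monomial]
  calc _ ≤ ∑ k ∈ Finset.range p, A * (1 / 2) ^ k := norm_sum_le_of_le _ hterm
    _ = A * ∑ k ∈ Finset.range p, (1 / 2 : ℝ) ^ k := (Finset.mul_sum _ _ _).symm
    _ ≤ A * 2 := by gcongr; exact sum_geometric_two_le p
    _ = 2 * A := mul_comm _ _

lemma norm_scaledTaylor_eval_sub_le (h : HasDerivBoundOn M A σ F (ball x r))
    (hM : ∀ a, 0 < M a) (hA : 0 ≤ A) (hσ : 0 ≤ σ) (hl : 0 ≤ l) (hlr : 2 * l < r) {y : ℝ}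
    (hy : |y| ≤ 2) :
    ‖(scaledTaylor F x l p).eval (y : ℂ) - F (x + l * y)‖ ≤ A * (mseq M p * (4 * σ * l) ^ p) := by
  have hx : x ∈ ball x r := mem_ball_self (by linarith)
  have hly : |x + l * y - x| ≤ 2 * l := by
    rw [add_sub_cancel_left, abs_mul, abs_of_nonneg hl, mul_comm]
    gcongr
  have hxy : x + l * y ∈ ball x r := hly.trans_lt hlr
  rcases p with _ | n
  · simpa [scaledTaylor, mseq] using h.norm_iteratedDeriv_le _ hxy 0
  have hbound : ∀ s ∈ ball x r, ‖iteratedDerivWithin (n + 1) F (ball x r) s‖ ≤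
      A * σ ^ (n + 1) * M (n + 1) := fun s hs => by
    rw [iteratedDerivWithin_of_isOpen isOpen_ball hs]
    exact h.norm_iteratedDeriv_le s hs (n + 1)
  have htwo : (n : ℝ) + 1 ≤ 2 ^ (n + 1) := mod_cast (Nat.lt_two_pow_self (n := n + 1)).le
  have hMn := hM (n + 1)
  rw [scaledTaylor_eval_ofReal isOpen_ball hx, norm_sub_rev]
  calc _ ≤ A * σ ^ (n + 1) * M (n + 1) / n.factorial * |x + l * y - x| ^ (n + 1) :=
        norm_sub_taylorWithinEval_le (convex_ball x r) isOpen_ball.uniqueDiffOn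
          (h.contDiffOn.of_le (mod_cast le_top)) hbound hx hxy
    _ ≤ A * σ ^ (n + 1) * M (n + 1) / n.factorial * (2 * l) ^ (n + 1) := by gcongr
    _ = A * mseq M (n + 1) * (2 * σ * l) ^ (n + 1) * (n + 1) := by
        rw [mseq, Nat.factorial_succ, Nat.cast_mul, Nat.cast_succ,
          show 2 * σ * l = σ * (2 * l) by ring, mul_pow σ]
        field_simp
    _ ≤ A * mseq M (n + 1) * (2 * σ * l) ^ (n + 1) * 2 ^ (n + 1) := by
        have := mseq_pos hM (n + 1)
        gcongr
    _ = A * (mseq M (n + 1) * (4 * σ * l) ^ (n + 1)) := by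
        rw [show 4 * σ * l = 2 * σ * l * 2 by ring, mul_pow _ (2 : ℝ)]
        ring

lemma isPowerApprox_scaledTaylor {f : ℝ → ℂ} {j : ℕ} (hj : j ≠ 0)
    (hfj : HasDerivBoundOn M A σ (f ^ j) (ball x r))
    (hfj' : HasDerivBoundOn M A σ (f ^ (j + 1)) (ball x r)) (hM : ∀ a, 0 < M a) (hM₀ : M 0 = 1)
    (hA : 1 ≤ A) (hσ : 0 ≤ σ) (hl : 0 ≤ l) (hlr : 2 * l < r)
    (hp : ∀ k ≤ p, mseq M k * (8 * σ * l) ^ k ≤ 1) :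
    IsPowerApprox (fun y => f (x + l * y)) j (2 * A) (mseq M p * (4 * σ * l) ^ p)
      (scaledTaylor (f ^ j) x l p) (scaledTaylor (f ^ (j + 1)) x l p) := by
  have hA₀ : 0 ≤ A := zero_le_one.trans hA
  have hx : x ∈ ball x r := mem_ball_self (by linarith)
  have hδ : 0 ≤ mseq M p * (4 * σ * l) ^ p := by have := mseq_pos hM p; positivity
  have hdouble : A * (mseq M p * (4 * σ * l) ^ p) ≤ 2 * A * (mseq M p * (4 * σ * l) ^ p) := by
    gcongr
    linarith
  refine ⟨fun y hy => ?_, fun z => hfj.norm_scaledTaylor_eval_le hx hA₀ hl hp,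
    fun z => hfj'.norm_scaledTaylor_eval_le hx hA₀ hl hp,
    fun y hy => (hfj.norm_scaledTaylor_eval_sub_le hM hA₀ hσ hl hlr hy).trans hdouble,
    fun y hy => (hfj'.norm_scaledTaylor_eval_sub_le hM hA₀ hσ hl hlr hy).trans hdouble⟩
  have hxy : x + l * y ∈ ball x r := by
    rw [mem_ball, Real.dist_eq, add_sub_cancel_left, abs_mul, abs_of_nonneg hl]
    nlinarith
  have hpow : ‖f (x + l * y)‖ ^ j ≤ (2 * A) ^ j := by
    have hzero := hfj.norm_iteratedDeriv_le _ hxy 0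
    rw [iteratedDeriv_zero, Pi.pow_apply, norm_pow, pow_zero, hM₀, mul_one, mul_one] at hzero
    exact hzero.trans ((le_mul_of_one_le_left hA₀ one_le_two).trans
      (le_self_pow₀ (by linarith) hj))
  exact le_of_pow_le_pow_left₀ hj (by linarith) hpow

end HasDerivBoundOn

lemma exists_isHolomorphicApprox_of_hasDerivBoundOn {j : ℕ} (hj : j ≠ 0) {A : ℝ} (hA : 1 ≤ A) :
    ∃ C : ℝ, 0 ≤ C ∧ ∀ (f : ℝ → ℂ) (M : ℕ → ℝ) (σ x r l : ℝ) (p : ℕ),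
      (∀ a, 0 < M a) → M 0 = 1 → 0 < σ → 0 < l → 2 * l < r →
      HasDerivBoundOn M A σ (f ^ j) (ball x r) → HasDerivBoundOn M A σ (f ^ (j + 1)) (ball x r) →
      (∀ k ≤ p, mseq M k * (8 * σ * l) ^ k ≤ 1) → ∃ G, IsHolomorphicApprox f x (l / 4) C
        (C * (1 + p) * (mseq M p * (4 * σ * l) ^ p) ^ (1 / (4 * (j : ℝ) * (j + 1)))) G := by
  obtain ⟨C, hC, happrox⟩ :=
    exists_isHolomorphicApprox_of_isPowerApprox hj (A := 2 * A) (by linarith)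
  refine ⟨C, hC, fun f M σ x r l p hM hM₀ hσ hl hlr hfj hfj' hp => ?_⟩
  have hδ : 0 < mseq M p * (4 * σ * l) ^ p := mul_pos (mseq_pos hM p) (by positivity)
  have hδ₁ : mseq M p * (4 * σ * l) ^ p ≤ 1 := by
    refine le_trans ?_ (hp p le_rfl)
    have := mseq_pos hM p
    gcongr
    norm_num
  obtain ⟨F, hF⟩ := happrox _ _ _ _ hδ hδ₁
    (hfj.isPowerApprox_scaledTaylor hj hfj' hM hM₀ hA hσ.le hl.le hlr hp)
  rw [div_eq_mul_one_div l 4]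
  refine ⟨_, (hF.rescale hl).mono_right ?_⟩
  gcongr
  exact natDegree_scaledTaylor_le _ x l p

end TaylorApproximation

section CarlemanBound

open Metric

lemma one_add_mul_rpow_le {s δ : ℝ} {p : ℕ} (hs : 0 < s) (hδ : 0 < δ) (hδp : δ ≤ (1 / 2) ^ p) :
    (1 + p) * δ ^ s ≤ 1 + 1 / (s * Real.log 2) := by
  set c := s * Real.log 2
  have hc : 0 < c := mul_pos hs (Real.log_pos one_lt_two)
  have hdecay : δ ^ s ≤ Real.exp (-(c * p)) := by
    have hlog := Real.log_le_log hδ hδp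
    rw [Real.log_pow, one_div, Real.log_inv] at hlog
    rw [Real.rpow_def_of_pos hδ, Real.exp_le_exp]
    exact (mul_le_mul_of_nonneg_right hlog hs.le).trans_eq (by ring)
  calc (1 + p) * δ ^ s
      ≤ (1 + 1 / c) * (c * p + 1) * Real.exp (-(c * p)) := by
        gcongr
        rw [show (1 + 1 / c) * (c * p + 1) = 1 + p + (c * p + 1 / c) by field_simp; ring]
        exact le_add_of_nonneg_right (by positivity)
    _ ≤ (1 + 1 / c) * Real.exp (c * p) * Real.exp (-(c * p)) := by
        gcongr
        exact Real.add_one_le_exp _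
    _ = 1 + 1 / c := by rw [mul_assoc, ← Real.exp_add, add_neg_cancel, Real.exp_zero, mul_one]

lemma rpow_le_sq_of_le_pow {s δ X : ℝ} {q : ℕ} (hδ : 0 < δ) (hδ₁ : δ ≤ 1) (hX : 0 ≤ X)
    (hq : q ≠ 0) (hs : 2 ≤ s * q) (h : δ ≤ X ^ q) : δ ^ s ≤ X ^ 2 := by
  have hq₀ : (0 : ℝ) < q := mod_cast Nat.pos_of_ne_zero hq
  calc δ ^ s ≤ δ ^ (2 / q : ℝ) :=
        Real.rpow_le_rpow_of_exponent_ge hδ hδ₁ ((div_le_iff₀ hq₀).2 hs)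
    _ ≤ (X ^ q) ^ (2 / q : ℝ) := Real.rpow_le_rpow hδ.le h (by positivity)
    _ = X ^ 2 := by
        rw [← Real.rpow_natCast, ← Real.rpow_mul hX, mul_div_cancel₀ _ hq₀.ne', Real.rpow_two]

lemma one_add_mul_mul_half_pow_rpow_le {s T X Y : ℝ} {p q : ℕ} (hT : 0 < T) (hT₁ : T ≤ 1)
    (hX : 0 ≤ X) (hY : 0 ≤ Y) (hs : 0 < s) (hq : q ≠ 0) (hsq : 2 ≤ s * q) (hTX : T ≤ X ^ q)
    (hTY : T ≤ Y ^ q) :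
    (1 + p) * (T * (1 / 2) ^ p) ^ (4 * s) ≤
      (1 + 1 / (2 * s * Real.log 2)) * X ^ 2 * Y ^ 2 := by
  set δ := T * (1 / 2) ^ p
  have hδ : 0 < δ := by positivity
  have hδp : δ ≤ (1 / 2) ^ p := mul_le_of_le_one_left (by positivity) hT₁
  have hδT : δ ≤ T :=
    mul_le_of_le_one_right hT.le (pow_le_one₀ (by norm_num) (by norm_num))
  calc (1 + p) * δ ^ (4 * s) = (1 + p) * δ ^ (2 * s) * δ ^ s * δ ^ s := by
        rw [show 4 * s = 2 * s + s + s by ring, Real.rpow_add hδ, Real.rpow_add hδ]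
        ring
    _ ≤ (1 + 1 / (2 * s * Real.log 2)) * X ^ 2 * Y ^ 2 := by
        gcongr
        · exact one_add_mul_rpow_le (by positivity) hδ hδp
        · exact rpow_le_sq_of_le_pow hδ (hδT.trans hT₁) hX hq hsq (hδT.trans hTX)
        · exact rpow_le_sq_of_le_pow hδ (hδT.trans hT₁) hY hq hsq (hδT.trans hTY)

lemma exists_isHolomorphicApprox_sq_mul_sq {j q : ℕ} (hj : j ≠ 0) (hq : 32 * (j * (j + 1)) ≤ q)
    {A : ℝ} (hA : 1 ≤ A) :
    ∃ C₁ C₂ : ℝ, 0 ≤ C₁ ∧ 0 ≤ C₂ ∧ ∀ (f : ℝ → ℂ) (M : ℕ → ℝ) (σ x r l : ℝ) (p : ℕ),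
      (∀ a, 0 < M a) → M 0 = 1 → 0 < σ → 0 < l → 2 * l < r →
      HasDerivBoundOn M A σ (f ^ j) (ball x r) → HasDerivBoundOn M A σ (f ^ (j + 1)) (ball x r) →
      (∀ k ≤ p, mseq M k * (8 * σ * l) ^ k ≤ 1) → ∃ G, ∀ X Y : ℝ, 0 ≤ X → 0 ≤ Y →
        mseq M p * (8 * σ * l) ^ p ≤ X ^ q → mseq M p * (8 * σ * l) ^ p ≤ Y ^ q →
          IsHolomorphicApprox f x (l / 4) C₁ (C₂ * X ^ 2 * Y ^ 2) G := by
  obtain ⟨C, hC, happrox⟩ := exists_isHolomorphicApprox_of_hasDerivBoundOn hj hA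
  have hq₀ : q ≠ 0 := (lt_of_lt_of_le (by positivity) hq).ne'
  set s : ℝ := 1 / (16 * j * (j + 1))
  have hs : 0 < s := one_div_pos.2 (by positivity)
  have hsq : 2 ≤ s * q := by
    have hq' : (32 * (j * (j + 1)) : ℝ) ≤ q := mod_cast hq
    rw [one_div_mul_eq_div, le_div_iff₀ (by positivity)]
    linarith
  refine ⟨C, C * (1 + 1 / (2 * s * Real.log 2)), hC, by positivity,
    fun f M σ x r l p hM hM₀ hσ hl hlr hfj hfj' hp => ?_⟩
  obtain ⟨G, hG⟩ := happrox f M σ x r l p hM hM₀ hσ hl hlr hfj hfj' hp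
  refine ⟨G, fun X Y hX hY hTX hTY => hG.mono_right ?_⟩
  have hT : 0 < mseq M p * (8 * σ * l) ^ p := mul_pos (mseq_pos hM p) (by positivity)
  have hδ : mseq M p * (4 * σ * l) ^ p = mseq M p * (8 * σ * l) ^ p * (1 / 2) ^ p := by
    rw [mul_assoc (mseq M p), ← mul_pow, show 8 * σ * l * (1 / 2) = 4 * σ * l by ring]
  have hexp : 1 / (4 * (j : ℝ) * (j + 1)) = 4 * s := by
    simp only [s]
    field_simp
    norm_num
  calc _ = C * ((1 + p) * (mseq M p * (8 * σ * l) ^ p * (1 / 2) ^ p) ^ (4 * s)) := by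
        rw [hδ, hexp, mul_assoc]
    _ ≤ C * ((1 + 1 / (2 * s * Real.log 2)) * X ^ 2 * Y ^ 2) := mul_le_mul_of_nonneg_left
        (one_add_mul_mul_half_pow_rpow_le hT (hp p le_rfl) hX hY hs hq₀ hsq hTX hTY) hC
    _ = _ := by ring

variable {f : ℝ → ℂ} {M N : ℕ → ℝ} {J : Set ℝ} {j q : ℕ} {A D σ r : ℝ}

lemma exists_isDyadicApprox (hj : j ≠ 0) (hq : 32 * (j * (j + 1)) ≤ q) (hM : ∀ a, 0 < M a)
    (hM₀ : M 0 = 1) (hN : ∀ a, 0 < N a) (hD : 0 ≤ D)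
    (hMN : ∀ t, 0 < t → ∃ p, (∀ i ≤ p, mseq M i * t ^ i ≤ 1) ∧
      ∀ a, mseq M p * t ^ p ≤ (mseq N a * (D * t) ^ a) ^ q)
    (hA : 1 ≤ A) (hσ : 0 < σ) (hr : 0 < r) (hfj : ∀ x ∈ J, HasDerivBoundOn M A σ (f ^ j) (ball x r))
    (hfj' : ∀ x ∈ J, HasDerivBoundOn M A σ (f ^ (j + 1)) (ball x r)) :
    ∃ K C G, IsDyadicApprox f J (r / 16) K C (32 * D * σ) (mseq N) G := by
  obtain ⟨C₁, C₂, hC₁, hC₂, happrox⟩ := exists_isHolomorphicApprox_sq_mul_sq hj hq hA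
  have hl : ∀ i : ℕ, 0 < r / 4 / 2 ^ i := fun i => by positivity
  have hlr : ∀ i : ℕ, 2 * (r / 4 / 2 ^ i) < r := fun i => by
    have : r / 4 / 2 ^ i ≤ r / 4 := div_le_self (by positivity) (one_le_pow₀ one_le_two)
    linarith
  have ht : ∀ i : ℕ, 0 < 8 * σ * (r / 4 / 2 ^ i) := fun i => mul_pos (by positivity) (hl i)
  choose p hp hpN using fun i => hMN _ (ht i)
  choose! G hG using fun i x (hx : x ∈ J) => happrox f M σ x r _ (p i) hM hM₀ hσ (hl i) (hlr i)
    (hfj x hx) (hfj' x hx) (hp i)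
  have hweight : ∀ i b, 0 ≤ mseq N b * (D * (8 * σ * (r / 4 / 2 ^ i))) ^ b := fun i b => by
    have := mseq_pos hN b
    positivity
  have hN₁ := mseq_pos hN 1
  refine ⟨C₁, √C₂ * (mseq N 1 * (2 * D * σ * r)), G, by positivity, hC₁, by positivity,
    by positivity, fun b => (mseq_pos hN b).le, fun i b x hx => ?_⟩
  convert hG i x hx _ _ (hweight i 1) (hweight i b) (hpN i 1) (hpN i b) using 1
  · ring
  · have hrate : 32 * D * σ * (r / 16 / 2 ^ i) = D * (8 * σ * (r / 4 / 2 ^ i)) := by ring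
    have hfirst : mseq N 1 * (2 * D * σ * r) * (1 / 2) ^ i =
        mseq N 1 * (D * (8 * σ * (r / 4 / 2 ^ i))) ^ 1 := by
      rw [one_div, inv_pow]
      ring
    rw [hrate, mul_assoc √C₂, hfirst, mul_pow, mul_pow √C₂, Real.sq_sqrt hC₂]

lemma exists_hasDerivBoundOn_of_pow (hJ : IsOpen J) (hj : j ≠ 0) (hq : 32 * (j * (j + 1)) ≤ q)
    (hM : ∀ a, 0 < M a) (hM₀ : M 0 = 1) (hN : ∀ a, 0 < N a) (hNroot : RootTendsToInfty (mseq N))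
    (hD : 0 < D)
    (hMN : ∀ t, 0 < t → ∃ p, (∀ i ≤ p, mseq M i * t ^ i ≤ 1) ∧
      ∀ a, mseq M p * t ^ p ≤ (mseq N a * (D * t) ^ a) ^ q)
    (hA : 1 ≤ A) (hσ : 0 < σ) (hr : 0 < r) (hfj : ∀ x ∈ J, HasDerivBoundOn M A σ (f ^ j) (ball x r))
    (hfj' : ∀ x ∈ J, HasDerivBoundOn M A σ (f ^ (j + 1)) (ball x r)) :
    ∃ C, 0 < C ∧ HasDerivBoundOn N C (256 * D * σ) f J := by
  obtain ⟨K, C, G, hG⟩ := exists_isDyadicApprox hj hq hM hM₀ hN hD.le hMN hA hσ hr hfj hfj'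
  have hK := hG.bound_nonneg
  have hC := hG.const_nonneg
  obtain ⟨hf, hderiv⟩ := hG.contDiffOn_and_norm_iteratedDeriv_le hJ
  obtain ⟨L, hL, hLle⟩ := hNroot.exists_pow_le_mul (mseq_pos hN)
    (r := 2 / (r / 16) / (256 * D * σ)) (by positivity)
  refine ⟨L * K + 4 * √K * C + 1, by positivity, hf, fun x hx a => (hderiv a x hx).trans ?_⟩
  have hNa := mseq_pos hN a
  have hgeom : (2 / (r / 16)) ^ a ≤ L * mseq N a * (256 * D * σ) ^ a := by
    have := hLle a
    rwa [div_pow _ (256 * D * σ), div_le_iff₀ (by positivity)] at this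
  have hjump : IsDyadicApprox.jumpConst K C (32 * D * σ) (mseq N) a 0 =
      2 * √K * C * a.factorial * mseq N a * (256 * D * σ) ^ a := by
    rw [IsDyadicApprox.jumpConst, add_zero, show 256 * D * σ = 8 * (32 * D * σ) by ring, mul_pow 8]
    ring
  rw [hjump, ← factorial_mul_mseq N a]
  calc a.factorial * (2 / (r / 16)) ^ a * K +
        2 * (2 * √K * C * a.factorial * mseq N a * (256 * D * σ) ^ a)
      ≤ a.factorial * (L * mseq N a * (256 * D * σ) ^ a) * K +
        2 * (2 * √K * C * a.factorial * mseq N a * (256 * D * σ) ^ a) +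
        1 * (256 * D * σ) ^ a * (a.factorial * mseq N a) := by
        refine le_add_of_le_of_nonneg ?_ (by positivity)
        gcongr
    _ = (L * K + 4 * √K * C + 1) * (256 * D * σ) ^ a * (a.factorial * mseq N a) := by ring

end CarlemanBound

section DenjoyCarlemanClasses

lemma contDiffOn_of_forall_isCompact_closure {E F : Type*} [NormedAddCommGroup E]
    [NormedSpace ℝ E] [LocallyCompactSpace E] [NormedAddCommGroup F] [NormedSpace ℝ F]
    {n : WithTop ℕ∞} {f : E → F} {U : Set E} (hU : IsOpen U)
    (h : ∀ V, IsOpen V → IsCompact (closure V) → closure V ⊆ U → ContDiffOn ℝ n f V) :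
    ContDiffOn ℝ n f U := by
  refine contDiffOn_of_locally_contDiffOn fun x hx => ?_
  obtain ⟨V, hV, hxV, hVU, hVc⟩ :=
    exists_open_between_and_isCompact_closure isCompact_singleton hU (singleton_subset_iff.2 hx)
  exact ⟨V, hV, hxV rfl, (h V hV hVc hVU).mono inter_subset_right⟩

lemma RoumieuOn.of_norm_le {E : Type*} [NormedAddCommGroup E] [NormedSpace ℝ E] {M : ℕ → ℝ}
    {f : E → ℂ} {U : Set E} {A σ : ℝ} (hM : ∀ a, 0 < M a) (hσ : 0 < σ)
    (hf : ContDiffOn ℝ (⊤ : ℕ∞) f U)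
    (h : ∀ x ∈ U, ∀ a : ℕ, ‖iteratedFDerivWithin ℝ a f U x‖ ≤ A * σ ^ a * M a) :
    RoumieuOn M f U := by
  refine ⟨hf, fun V _ _ hVU => ⟨max 1 A, σ, by positivity, hσ, fun x hx a =>
    (h x (hVU (subset_closure hx)) a).trans ?_⟩⟩
  have := hM a
  gcongr
  exact le_max_right _ _

lemma BeurlingOn.of_norm_le {E : Type*} [NormedAddCommGroup E] [NormedSpace ℝ E] {M : ℕ → ℝ}
    {f : E → ℂ} {U : Set E} (hM : ∀ a, 0 < M a) (hf : ContDiffOn ℝ (⊤ : ℕ∞) f U)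
    (h : ∀ σ : ℝ, 0 < σ → ∃ A : ℝ, ∀ x ∈ U, ∀ a : ℕ,
      ‖iteratedFDerivWithin ℝ a f U x‖ ≤ A * σ ^ a * M a) :
    BeurlingOn M f U := by
  refine ⟨hf, fun V _ _ hVU σ hσ => ?_⟩
  obtain ⟨A, hA⟩ := h σ hσ
  refine ⟨max 1 A, by positivity, fun x hx a => (hA x (hVU (subset_closure hx)) a).trans ?_⟩
  have := hM a
  gcongr
  exact le_max_right _ _

variable {M : ℕ → ℝ} {F : ℝ → ℂ} {U V : Set ℝ} {A σ : ℝ}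

lemma hasDerivBoundOn_iff_norm_iteratedFDerivWithin_le (hU : IsOpen U) (hVU : V ⊆ U) :
    HasDerivBoundOn M A σ F V ↔ ContDiffOn ℝ (⊤ : ℕ∞) F V ∧
      ∀ x ∈ V, ∀ a : ℕ, ‖iteratedFDerivWithin ℝ a F U x‖ ≤ A * σ ^ a * M a := by
  have hnorm : ∀ x ∈ V, ∀ a, ‖iteratedFDerivWithin ℝ a F U x‖ = ‖iteratedDeriv a F x‖ :=
    fun x hx a => by
      rw [norm_iteratedFDerivWithin_eq_norm_iteratedDerivWithin,
        iteratedDerivWithin_of_isOpen hU (hVU hx)]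
  refine ⟨fun h => ⟨h.contDiffOn, fun x hx a => ?_⟩, fun h => ⟨h.1, fun x hx a => ?_⟩⟩
  · exact (hnorm x hx a).trans_le (h.norm_iteratedDeriv_le x hx a)
  · exact (hnorm x hx a).ge.trans (h.2 x hx a)

lemma roumieuOn_iff_hasDerivBoundOn (hU : IsOpen U) :
    RoumieuOn M F U ↔ ∀ V, IsOpen V → IsCompact (closure V) → closure V ⊆ U →
      ∃ A σ, 0 < A ∧ 0 < σ ∧ HasDerivBoundOn M A σ F V := by
  refine ⟨fun h V hV hVc hVU => ?_, fun h => ⟨?_, fun V hV hVc hVU => ?_⟩⟩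
  · obtain ⟨A, σ, hA, hσ, hle⟩ := h.2 V hV hVc hVU
    have hVU' := subset_closure.trans hVU
    exact ⟨A, σ, hA, hσ, (hasDerivBoundOn_iff_norm_iteratedFDerivWithin_le hU hVU').2
      ⟨h.1.mono hVU', hle⟩⟩
  · refine contDiffOn_of_forall_isCompact_closure hU fun V hV hVc hVU => ?_
    obtain ⟨A, σ, _, _, hF⟩ := h V hV hVc hVU
    exact hF.contDiffOn
  · obtain ⟨A, σ, hA, hσ, hF⟩ := h V hV hVc hVU
    exact ⟨A, σ, hA, hσ, ((hasDerivBoundOn_iff_norm_iteratedFDerivWithin_le hU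
      (subset_closure.trans hVU)).1 hF).2⟩

lemma beurlingOn_iff_hasDerivBoundOn (hU : IsOpen U) :
    BeurlingOn M F U ↔ ∀ V, IsOpen V → IsCompact (closure V) → closure V ⊆ U →
      ∀ σ, 0 < σ → ∃ A, 0 < A ∧ HasDerivBoundOn M A σ F V := by
  refine ⟨fun h V hV hVc hVU σ hσ => ?_, fun h => ⟨?_, fun V hV hVc hVU σ hσ => ?_⟩⟩
  · obtain ⟨A, hA, hle⟩ := h.2 V hV hVc hVU σ hσ
    have hVU' := subset_closure.trans hVU
    exact ⟨A, hA, (hasDerivBoundOn_iff_norm_iteratedFDerivWithin_le hU hVU').2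
      ⟨h.1.mono hVU', hle⟩⟩
  · refine contDiffOn_of_forall_isCompact_closure hU fun V hV hVc hVU => ?_
    obtain ⟨A, _, hF⟩ := h V hV hVc hVU 1 one_pos
    exact hF.contDiffOn
  · obtain ⟨A, hA, hF⟩ := h V hV hVc hVU σ hσ
    exact ⟨A, hA, ((hasDerivBoundOn_iff_norm_iteratedFDerivWithin_le hU
      (subset_closure.trans hVU)).1 hF).2⟩

variable {M : ℕ → ℕ → ℝ} {j k : ℕ} {B : ℝ}

lemma exists_rate_hasDerivBoundOn_of_pow (hj : j ≠ 0) (hjk : 32 * (j * (j + 1)) ≤ 2 ^ (k - 2))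
    (hpos : ∀ i, 1 ≤ i → i ≤ k → ∀ a, 0 < M i a) (hzero : ∀ i, 1 ≤ i → i ≤ k → M i 0 = 1)
    (hroot : RootTendsToInfty (mseq (M 2))) (hroot' : RootTendsToInfty (mseq (M k)))
    (hB : 0 < B) (hG : ∀ t, 0 < t → GammaBar (mseq (M 2)) (B * t) ≤ GammaLow (mseq (M 1)) t)
    (hmg : ∀ i, 2 ≤ i → i ≤ k - 1 → MgFinite (M i) (M (i + 1))) :
    ∃ R, 0 < R ∧ ∀ (f : ℝ → ℂ) (V W : Set ℝ) (A A' σ σ' : ℝ), IsOpen V → IsCompact (closure V) →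
      IsOpen W → closure V ⊆ W → 0 < σ → 0 < σ' → HasDerivBoundOn (M 1) A σ (f ^ j) W →
      HasDerivBoundOn (M 1) A' σ' (f ^ (j + 1)) W →
      ∃ C, 0 < C ∧ HasDerivBoundOn (M k) C (R * max σ σ') f V := by
  have hk : 2 ≤ k := by
    by_contra! hk
    rw [Nat.sub_eq_zero_of_le hk.le, pow_zero] at hjk
    have : 0 < j * (j + 1) := by positivity
    omega
  have hM := hpos 1 le_rfl (by omega)
  have hM₀ := hzero 1 le_rfl (by omega)
  obtain ⟨D, hD, hMN⟩ := exists_mseq_mul_pow_le_pow hk hpos hzero hroot hB hG hmg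
  refine ⟨256 * D, by positivity, fun f V W A A' σ σ' hV hVc hW hVW hσ hσ' hfj hfj' => ?_⟩
  obtain ⟨r, hr, hrW⟩ := hVc.exists_thickening_subset_open hW hVW
  have hball : ∀ x ∈ V, Metric.ball x r ⊆ W := fun x hx =>
    (Metric.ball_subset_thickening (subset_closure hx) r).trans hrW
  have hmax : 1 ≤ max 1 (max A A') := le_max_left _ _
  replace hfj := hfj.mono hM (zero_le_one.trans hmax) hσ.le
    ((le_max_left A A').trans (le_max_right _ _)) (le_max_left σ σ')
  replace hfj' := hfj'.mono hM (zero_le_one.trans hmax) hσ'.le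
    ((le_max_right A A').trans (le_max_right _ _)) (le_max_right σ σ')
  exact exists_hasDerivBoundOn_of_pow hV hj hjk hM hM₀ (hpos k (by omega) le_rfl) hroot' hD hMN
    hmax (lt_max_of_lt_left hσ) hr (fun x hx => hfj.anti (hball x hx))
    fun x hx => hfj'.anti (hball x hx)

end DenjoyCarlemanClasses

theorem statement16_general {M : ℕ → ℕ → ℝ} {j k : ℕ} {B : ℝ} (hj : j ≠ 0)
    (hjk : 32 * (j * (j + 1)) ≤ 2 ^ (k - 2)) (hpos : ∀ i, 1 ≤ i → i ≤ k → ∀ a, 0 < M i a)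
    (hzero : ∀ i, 1 ≤ i → i ≤ k → M i 0 = 1) (hroot : RootTendsToInfty (mseq (M 2)))
    (hroot' : RootTendsToInfty (mseq (M k))) (hB : 0 < B)
    (hG : ∀ t, 0 < t → GammaBar (mseq (M 2)) (B * t) ≤ GammaLow (mseq (M 1)) t)
    (hmg : ∀ i, 2 ≤ i → i ≤ k - 1 → MgFinite (M i) (M (i + 1)))
    {U : Set ℝ} (hU : IsOpen U) (f : ℝ → ℂ) :
    (RoumieuOn (M 1) (f ^ j) U → RoumieuOn (M 1) (f ^ (j + 1)) U → RoumieuOn (M k) f U) ∧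
      (BeurlingOn (M 1) (f ^ j) U → BeurlingOn (M 1) (f ^ (j + 1)) U → BeurlingOn (M k) f U) := by
  obtain ⟨R, hR, hdiv⟩ :=
    exists_rate_hasDerivBoundOn_of_pow hj hjk hpos hzero hroot hroot' hB hG hmg
  simp only [roumieuOn_iff_hasDerivBoundOn hU, beurlingOn_iff_hasDerivBoundOn hU]
  constructor
  · intro hfj hfj' V hV hVc hVU
    obtain ⟨W, hW, hVW, hWU, hWc⟩ := exists_open_between_and_isCompact_closure hVc hU hVU
    obtain ⟨A, σ, _, hσ, hfjW⟩ := hfj W hW hWc hWU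
    obtain ⟨A', σ', _, hσ', hfjW'⟩ := hfj' W hW hWc hWU
    obtain ⟨C, hC, hf⟩ := hdiv f V W A A' σ σ' hV hVc hW hVW hσ hσ' hfjW hfjW'
    exact ⟨C, R * max σ σ', hC, by positivity, hf⟩
  · intro hfj hfj' V hV hVc hVU σ hσ
    obtain ⟨W, hW, hVW, hWU, hWc⟩ := exists_open_between_and_isCompact_closure hVc hU hVU
    have hσR : 0 < σ / R := div_pos hσ hR
    obtain ⟨A, _, hfjW⟩ := hfj W hW hWc hWU (σ / R) hσR
    obtain ⟨A', _, hfjW'⟩ := hfj' W hW hWc hWU (σ / R) hσR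
    have hf := hdiv f V W A A' _ _ hV hVc hW hVW hσR hσR hfjW hfjW'
    rwa [max_self, mul_div_cancel₀ σ hR.ne'] at hf

/-- the core division lemma: if `f^j` and `f^{j+1}` belong to the class
given by `M 1` on `(-1,1)` (with `k = ⌈log₂ (j (j+1))⌉ + 7` suitably related weight
sequences `M 1, …, M k`), then `f` is of class `E^{M k}` (Roumieu case), resp.
`E^{(M k)}` (Beurling case), on `(-1,1)`. -/
theorem statement16 (j : ℕ) (hj : 1 ≤ j) (k : ℕ)
    (hk : k = Nat.clog 2 (j * (j + 1)) + 7)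
    (M : ℕ → ℕ → ℝ)
    (hws : ∀ i : ℕ, 1 ≤ i → i ≤ k → IsWeightSeq (M i))
    (hroot : ∀ i : ℕ, 1 ≤ i → i ≤ k → RootTendsToInfty (mseq (M i)))
    (hB : ∃ B : ℝ, 1 ≤ B ∧
      ∀ t : ℝ, 0 < t → GammaBar (mseq (M 2)) (B * t) ≤ GammaLow (mseq (M 1)) t)
    (hmg : ∀ i : ℕ, 2 ≤ i → i ≤ k - 1 → MgFinite (M i) (M (i + 1)))
    (f : ℝ → ℂ) :
    ((∃ σ : ℝ, 0 < σ ∧ ∃ A : ℝ,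
        ContDiffOn ℝ (⊤ : ℕ∞) (f ^ j) (Ioo (-1 : ℝ) 1) ∧
        ContDiffOn ℝ (⊤ : ℕ∞) (f ^ (j + 1)) (Ioo (-1 : ℝ) 1) ∧
        (∀ x ∈ Ioo (-1 : ℝ) 1, ∀ ℓ : ℕ,
          ‖iteratedFDerivWithin ℝ ℓ (f ^ j) (Ioo (-1 : ℝ) 1) x‖ ≤ A * σ ^ ℓ * M 1 ℓ) ∧
        (∀ x ∈ Ioo (-1 : ℝ) 1, ∀ ℓ : ℕ,
          ‖iteratedFDerivWithin ℝ ℓ (f ^ (j + 1)) (Ioo (-1 : ℝ) 1) x‖ ≤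
            A * σ ^ ℓ * M 1 ℓ)) →
      RoumieuOn (M k) f (Ioo (-1 : ℝ) 1)) ∧
    ((ContDiffOn ℝ (⊤ : ℕ∞) (f ^ j) (Ioo (-1 : ℝ) 1) ∧
        ContDiffOn ℝ (⊤ : ℕ∞) (f ^ (j + 1)) (Ioo (-1 : ℝ) 1) ∧
        ∀ σ : ℝ, 0 < σ → ∃ A : ℝ,
          (∀ x ∈ Ioo (-1 : ℝ) 1, ∀ ℓ : ℕ,
            ‖iteratedFDerivWithin ℝ ℓ (f ^ j) (Ioo (-1 : ℝ) 1) x‖ ≤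
              A * σ ^ ℓ * M 1 ℓ) ∧
          (∀ x ∈ Ioo (-1 : ℝ) 1, ∀ ℓ : ℕ,
            ‖iteratedFDerivWithin ℝ ℓ (f ^ (j + 1)) (Ioo (-1 : ℝ) 1) x‖ ≤
              A * σ ^ ℓ * M 1 ℓ)) →
      BeurlingOn (M k) f (Ioo (-1 : ℝ) 1)) := by
  obtain ⟨B, hB, hG⟩ := hB
  have hjk : 32 * (j * (j + 1)) ≤ 2 ^ (k - 2) := by
    have := Nat.le_pow_clog one_lt_two (j * (j + 1))
    rw [hk, Nat.add_sub_assoc (by norm_num), pow_add]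
    omega
  have hpos : ∀ i, 1 ≤ i → i ≤ k → ∀ a, 0 < M i a := fun i hi hik => (hws i hi hik).2.1
  have hM := hpos 1 le_rfl (by omega)
  obtain ⟨hRoumieu, hBeurling⟩ := statement16_general (by omega) hjk hpos
    (fun i hi hik => (hws i hi hik).1) (hroot 2 (by omega) (by omega))
    (hroot k (by omega) le_rfl) (by positivity) hG hmg (isOpen_Ioo (a := (-1 : ℝ)) (b := 1)) f
  refine ⟨fun ⟨σ, hσ, A, hfj, hfj', hbound, hbound'⟩ =>
    hRoumieu (.of_norm_le hM hσ hfj hbound) (.of_norm_le hM hσ hfj' hbound'),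
    fun ⟨hfj, hfj', hbound⟩ => hBeurling (.of_norm_le hM hfj fun σ hσ => ?_)
      (.of_norm_le hM hfj' fun σ hσ => ?_)⟩
  · exact (hbound σ hσ).imp fun A hA => hA.1
  · exact (hbound σ hσ).imp fun A hA => hA.2
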